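/- arXiv:2404.12907 — 13 statements merged into one kernel-verified Lean document; each statement's English description precedes it below -/
import Mathlib

section
/- For any tournament T, the maximum number of pairwise arc-disjoint directed triangles in T is at most the minimum size of a feedback arc set of T, which in turn is at most 6 times (one plus the maximum number of pairwise arc-disjoint directed triangles in T); i.e., ADT(T) ≤ FAST(T) ≤ 6(ADT(T) + 1). -/
variable {V : Type*}

def IsTournament (E : V → V → Prop) : Prop :=
  (∀ v : V, ¬ E v v) ∧ ∀ u v : V, u ≠ v → (E u v ↔ ¬ E v u)

def Acyclic (E : V → V → Prop) : Prop :=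
  ∀ v : V, ¬ Relation.TransGen E v v

noncomputable def indeg [Fintype V] (E : V → V → Prop) (v : V) : ℕ :=
  Set.ncard {u : V | E u v}

noncomputable def indegOn [Fintype V] (E : V → V → Prop) (X : Set V) (v : V) : ℕ :=
  Set.ncard {u : V | u ∈ X ∧ E u v}

def IsTriangle (E : V → V → Prop) (t : V × V × V) : Prop :=
  E t.1 t.2.1 ∧ E t.2.1 t.2.2 ∧ E t.2.2 t.1

def triArcs (t : V × V × V) : Set (V × V) :=
  {(t.1, t.2.1), (t.2.1, t.2.2), (t.2.2, t.1)}

def IsADTFamily (E : V → V → Prop) (F : Finset (V × V × V)) : Prop :=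
  (∀ t ∈ F, IsTriangle E t) ∧
    ∀ t ∈ F, ∀ s ∈ F, t ≠ s → Disjoint (triArcs t) (triArcs s)

noncomputable def ADT (E : V → V → Prop) : ℕ :=
  sSup {n : ℕ | ∃ F : Finset (V × V × V), IsADTFamily E F ∧ F.card = n}

def IsFAS (E : V → V → Prop) (S : Finset (V × V)) : Prop :=
  Acyclic fun u v => E u v ∧ (u, v) ∉ S

noncomputable def FAST (E : V → V → Prop) : ℕ :=
  sInf {n : ℕ | ∃ S : Finset (V × V), IsFAS E S ∧ S.card = n}

def IsFVS (E : V → V → Prop) (F : Finset V) : Prop :=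
  Acyclic fun a b => E a b ∧ a ∉ F ∧ b ∉ F

noncomputable def FVST [Fintype V] (E : V → V → Prop) : ℕ :=
  sInf {n : ℕ | ∃ F : Finset V, IsFVS E F ∧ F.card = n}

noncomputable def maxdb [Fintype V] (E : V → V → Prop) : ℕ :=
  (Finset.range (Fintype.card V)).sup fun d => Set.ncard {v : V | indeg E v = d}

open Classical in
noncomputable def prefLen [Fintype V] (E : V → V → Prop) : ℕ :=
  if ∀ d < Fintype.card V, Set.ncard {v : V | indeg E v = d} = 1 then Fintype.card V
  else sInf {d : ℕ | d < Fintype.card V ∧ Set.ncard {v : V | indeg E v = d} ≠ 1}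

noncomputable def prefSet [Fintype V] (E : V → V → Prop) : Set V :=
  {v : V | indeg E v < prefLen E}

noncomputable def minIndeg [Fintype V] (E : V → V → Prop) : ℕ :=
  sInf {k : ℕ | ∃ v : V, indeg E v = k}

noncomputable def minIndegOn [Fintype V] (E : V → V → Prop) (X : Set V) : ℕ :=
  sInf {k : ℕ | ∃ v ∈ X, indegOn E X v = k}

def emptyBuckets [Fintype V] (E : V → V → Prop) : Set ℕ :=
  {d : ℕ | d < Fintype.card V ∧ {v : V | indeg E v = d} = ∅}

def backArcs [Fintype V] (E : V → V → Prop) : Set (V × V) :=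
  {p : V × V | E p.1 p.2 ∧ indeg E p.2 ≤ indeg E p.1}

def reverseArc (E : V → V → Prop) (u v : V) : V → V → Prop :=
  fun a b =>
    (¬ ((a, b) = (u, v) ∨ (a, b) = (v, u)) ∧ E a b) ∨
      ((a, b) = (u, v) ∧ E v u) ∨ ((a, b) = (v, u) ∧ E u v)

def affected [Fintype V] (E : V → V → Prop) (u v : V) : Set V :=
  {w : V | indeg E w + 1 = indeg E u ∨ indeg E w = indeg E u ∨ indeg E w = indeg E u + 1 ∨
      indeg E w + 1 = indeg E v ∨ indeg E w = indeg E v ∨ indeg E w = indeg E v + 1}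

def kLong [Fintype V] (E : V → V → Prop) (k : ℕ) (p : V × V) : Prop :=
  (k : ℤ) ≤ |(indeg E p.1 : ℤ) - (indeg E p.2 : ℤ)|

def longAdj [Fintype V] (E : V → V → Prop) (k : ℕ) (a b : V) : Prop :=
  ((a, b) ∈ backArcs E ∧ kLong E k (a, b)) ∨ ((b, a) ∈ backArcs E ∧ kLong E k (b, a))

def heavySet [Fintype V] (E : V → V → Prop) (k : ℕ) : Set V :=
  {v : V | k < Set.ncard {u : V | longAdj E k u v}}

open Classical in
/-- ordered nonadjacent pairs inside `X` -/
noncomputable def nonadj (R : V → V → Prop) (X : Finset V) : Finset (V × V) :=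
  (X ×ˢ X).filter fun p => p.1 ≠ p.2 ∧ ¬ R p.1 p.2 ∧ ¬ R p.2 p.1

open Classical in
lemma exists_good (R : V → V → Prop) (X : Finset V) (hX : X.Nonempty) :
    ∃ v ∈ X,
      ((X ×ˢ X).filter fun p => R v p.1 ∧ R p.1 p.2 ∧ ¬ R v p.2).card ≤
      ((X ×ˢ X).filter fun p => R p.1 v ∧ R v p.2 ∧ ¬ R p.1 p.2).card := by
  apply Finset.exists_le_of_sum_le hX
  apply le_of_eq
  simp only [Finset.card_filter, Finset.sum_product]
  rw [Finset.sum_comm]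

open Classical in
lemma css (R : V → V → Prop) (h2 : ∀ x y, R x y → ¬ R y x)
    (h3 : ∀ x y z, R x y → R y z → ¬ R z x) (n : ℕ) :
    ∀ X : Finset V, X.card = n → ∃ (S : Finset (V × V)) (f : V → ℕ),
      2 * S.card ≤ (nonadj R X).card ∧
      ∀ x ∈ X, ∀ y ∈ X, R x y → (x, y) ∉ S → f x < f y := by
  induction n using Nat.strong_induction_on with
  | _ n ih =>
  intro X hXn
  rcases X.eq_empty_or_nonempty with rfl | hX
  · exact ⟨∅, fun _ => 0, by simp, by simp⟩
  obtain ⟨v, hv, hfg⟩ := exists_good R X hX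
  have h1 : ∀ x, ¬ R x x := fun x h => h2 x x h h
  set A := X.filter (fun x => R v x) with hA
  set B := X.filter (fun x => x ≠ v ∧ ¬ R v x) with hB
  have hAX : A.card < n := by
    rw [← hXn]; apply Finset.card_lt_card
    refine (Finset.ssubset_iff_of_subset (Finset.filter_subset _ _)).2 ⟨v, hv, ?_⟩
    simp [h1]
  have hBX : B.card < n := by
    rw [← hXn]; apply Finset.card_lt_card
    refine (Finset.ssubset_iff_of_subset (Finset.filter_subset _ _)).2 ⟨v, hv, ?_⟩
    simp
  obtain ⟨SA, fA, hSA, hfA⟩ := ih _ hAX A rfl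
  obtain ⟨SB, fB, hSB, hfB⟩ := ih _ hBX B rfl
  set P := (X ×ˢ X).filter fun p => R v p.1 ∧ R p.1 p.2 ∧ ¬ R v p.2 with hP
  set Q := (X ×ˢ X).filter fun p => R p.1 v ∧ R v p.2 ∧ ¬ R p.1 p.2 with hQ
  set Q' := Q.map (Equiv.prodComm V V).toEmbedding with hQ'
  have memQ' : ∀ p : V × V, p ∈ Q' ↔ (p.2, p.1) ∈ Q := by
    rintro ⟨a, b⟩
    simp [hQ', Prod.swap]
  have hQc : Q'.card = Q.card := Finset.card_map _
  have hcount : (nonadj R A).card + (nonadj R B).card + Q.card + Q'.card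
      ≤ (nonadj R X).card := by
    rw [← Finset.card_union_of_disjoint, ← Finset.card_union_of_disjoint,
      ← Finset.card_union_of_disjoint]
    · apply Finset.card_le_card
      rintro ⟨a, b⟩ hab
      simp only [Finset.mem_union, memQ'] at hab
      simp only [nonadj, hA, hB, hQ, Finset.mem_filter, Finset.mem_product] at hab ⊢
      grind
    all_goals
      rw [Finset.disjoint_left]
      rintro ⟨a, b⟩ hab hab'
      try simp only [Finset.mem_union, memQ'] at hab
      try simp only [Finset.mem_union, memQ'] at hab'
      simp only [nonadj, hA, hB, hQ, Finset.mem_filter, Finset.mem_product] at hab hab'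
      grind
  set M := X.sup fB with hM
  refine ⟨SA ∪ SB ∪ P, fun x => if x = v then M + 1 else if R v x then M + 2 + fA x else fB x,
    ?_, ?_⟩
  · have e1 := Finset.card_union_le (SA ∪ SB) P
    have e2 := Finset.card_union_le SA SB
    omega
  · intro x hx y hy hxy hS
    have hMx : fB x ≤ M := Finset.le_sup hx
    have hMy : fB y ≤ M := Finset.le_sup hy
    have k1 := hfA x
    have k2 := hfB x
    simp only [Finset.mem_union, hP, hA, hB, Finset.mem_filter, Finset.mem_product] at hS k1 k2
    grind

open Classical in
noncomputable def arcF (t : V × V × V) : Finset (V × V) :=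
  {(t.1, t.2.1), (t.2.1, t.2.2), (t.2.2, t.1)}

lemma mem_arcF (t : V × V × V) (p : V × V) : p ∈ arcF t ↔ p ∈ triArcs t := by
  simp [arcF, triArcs]

open Classical in
lemma adt_le (E : V → V → Prop) (F : Finset (V × V × V)) (hF : IsADTFamily E F)
    (S : Finset (V × V)) (hS : IsFAS E S) : F.card ≤ S.card := by
  have key : ∀ t ∈ F, ∃ p, p ∈ S ∧ p ∈ triArcs t := by
    intro t ht
    by_contra hcon
    push Not at hcon
    obtain ⟨a, b, c⟩ := t
    obtain ⟨h1, h2, h3⟩ := hF.1 _ ht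
    simp only at h1 h2 h3
    have g : ∀ p, p ∈ triArcs (a, b, c) → p ∉ S := fun p hp hs => hcon p hs hp
    refine hS a (((Relation.TransGen.single (b := b) ⟨h1, g _ ?_⟩).tail (c := c) ⟨h2, g _ ?_⟩).tail
      ⟨h3, g _ ?_⟩) <;> simp [triArcs]
  rcases F.eq_empty_or_nonempty with rfl | ⟨t0, _⟩
  · simp
  haveI : Nonempty (V × V) := ⟨(t0.1, t0.1)⟩
  choose! p hp using key
  apply Finset.card_le_card_of_injOn p (fun t ht => (hp t ht).1)
  intro t ht s hs hts
  by_contra hne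
  exact Set.disjoint_left.1 (hF.2 t ht s hs hne) (hp t ht).2 (hts ▸ (hp s hs).2)

/-- ADT(T) ≤ FAST(T) ≤ 6(ADT(T) + 1). -/
theorem stmt0 [Fintype V] (E : V → V → Prop) (hT : IsTournament E) :
    ADT E ≤ FAST E ∧ FAST E ≤ 6 * (ADT E + 1) := by
  classical
  have hbdd : BddAbove {n : ℕ | ∃ F : Finset (V × V × V), IsADTFamily E F ∧ F.card = n} :=
    ⟨Fintype.card (V × V × V), by rintro n ⟨F, -, rfl⟩; exact Finset.card_le_univ F⟩
  have hmem : ADT E ∈ {n : ℕ | ∃ F : Finset (V × V × V), IsADTFamily E F ∧ F.card = n} :=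
    Nat.sSup_mem ⟨0, ∅, by simp [IsADTFamily], rfl⟩ hbdd
  obtain ⟨F, hF, hFc⟩ := hmem
  set D : Finset (V × V) := F.biUnion arcF with hD
  have hDc : D.card ≤ F.card * 3 :=
    Finset.card_biUnion_le_card_mul _ _ _ fun t _ => Finset.card_le_three
  obtain ⟨hirr, htot⟩ := hT
  have hasym : ∀ x y, E x y → ¬ E y x := by
    intro x y h
    have : x ≠ y := by rintro rfl; exact hirr _ h
    exact (htot x y this).1 h
  obtain ⟨S, f, hS, hf⟩ := css (fun x y => E x y ∧ (x, y) ∉ D)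
    (fun x y h h' => hasym x y h.1 h'.1) (by
      rintro x y z ⟨h1, d1⟩ ⟨h2, d2⟩ ⟨h3, d3⟩
      have hdis : ∀ s ∈ F, Disjoint (triArcs (x, y, z)) (triArcs s) := by
        intro s hs
        rw [Set.disjoint_left]
        intro p hp hps
        have hpD : p ∈ D := Finset.mem_biUnion.2 ⟨s, hs, (mem_arcF s p).2 hps⟩
        simp only [triArcs, Set.mem_insert_iff, Set.mem_singleton_iff] at hp
        rcases hp with rfl | rfl | rfl <;> contradiction
      have hnot : (x, y, z) ∉ F := by
        intro hin
        have hxy : (x, y) ∈ triArcs (x, y, z) := by simp [triArcs]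
        exact Set.disjoint_left.1 (hdis _ hin) hxy hxy
      have hfam : IsADTFamily E (insert (x, y, z) F) := by
        constructor
        · intro t ht
          rcases Finset.mem_insert.1 ht with rfl | ht
          · exact ⟨h1, h2, h3⟩
          · exact hF.1 t ht
        · intro t ht s hs hne
          rcases Finset.mem_insert.1 ht with rfl | ht <;>
          rcases Finset.mem_insert.1 hs with rfl | hs
          · exact absurd rfl hne
          · exact hdis s hs
          · exact (hdis t ht).symm
          · exact hF.2 t ht s hs hne
      have hle : F.card + 1 ≤ ADT E :=
        le_csSup hbdd ⟨_, hfam, Finset.card_insert_of_notMem hnot⟩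
      omega) _ Finset.univ rfl
  have hN : (nonadj (fun x y => E x y ∧ (x, y) ∉ D) Finset.univ).card ≤ D.card + D.card := by
    calc _ ≤ (D ∪ D.map (Equiv.prodComm V V).toEmbedding).card := by
          apply Finset.card_le_card
          rintro ⟨a, b⟩ hab
          simp only [nonadj, Finset.mem_filter] at hab
          have hm : (a, b) ∈ D.map (Equiv.prodComm V V).toEmbedding ↔ (b, a) ∈ D := by
            simp [Prod.swap]
          rw [Finset.mem_union, hm]
          have := htot a b hab.2.1
          tauto
      _ ≤ _ := by
          refine (Finset.card_union_le _ _).trans ?_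
          rw [Finset.card_map]
  have hFAS : IsFAS E (S ∪ D) := by
    intro v hv
    have : ∀ x y, Relation.TransGen (fun u v => E u v ∧ (u, v) ∉ S ∪ D) x y → f x < f y := by
      intro x y h
      have step : ∀ a b, (E a b ∧ (a, b) ∉ S ∪ D) → f a < f b := by
        rintro a b ⟨h1, h2⟩
        rw [Finset.mem_union, not_or] at h2
        exact hf a (Finset.mem_univ _) b (Finset.mem_univ _) ⟨h1, h2.2⟩ h2.1
      induction h with
      | single h => exact step _ _ h
      | tail _ h ih => exact ih.trans (step _ _ h)
    exact lt_irrefl _ (this v v hv)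
  constructor
  · have hm : FAST E ∈ {n : ℕ | ∃ S : Finset (V × V), IsFAS E S ∧ S.card = n} :=
      Nat.sInf_mem ⟨_, _, hFAS, rfl⟩
    obtain ⟨S', hS', hc⟩ := hm
    rw [← hFc, ← hc]
    exact adt_le E F hF S' hS'
  · have hle : FAST E ≤ (S ∪ D).card := Nat.sInf_le ⟨_, hFAS, rfl⟩
    have := Finset.card_union_le S D
    omega
end

section
/- Let T be a tournament and let uv ∈ E(T) be a back arc, i.e., d_T(u) ≥ d_T(v). Then there exist vertices forming a directed triangle in T that contains the arc uv. -/
variable {V : Type*}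

/-- Every back arc of a tournament lies on a directed triangle. -/
theorem stmt3 [Fintype V] (E : V → V → Prop) (hT : IsTournament E) (u v : V)
    (huv : E u v) (hback : indeg E v ≤ indeg E u) :
    ∃ w : V, IsTriangle E (u, v, w) := by
  obtain ⟨hirr, htot⟩ := hT
  by_contra hno
  have hne : u ≠ v := fun h => hirr v (h ▸ huv)
  have hlt : indeg E u < indeg E v := by
    apply Set.ncard_lt_ncard _ (Set.toFinite _)
    refine ⟨fun w hw => ?_, fun h => hirr u (h huv)⟩
    have hw' : E w u := hw
    have hwv : w ≠ v := fun h => (htot u v hne).1 huv (h ▸ hw')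
    exact (htot w v hwv).2 fun hvw => hno ⟨w, huv, hvw, hw'⟩
  omega
end

section
/- Let T be a non-empty tournament on n vertices with prefix P. Then: (1) every arc of T connecting a vertex of P with a vertex of V(T) \ P is directed from P to V(T) \ P; (2) the subtournament T[P] induced by P contains no back arc; and (3) if P ≠ V(T) then the degree bucket DB_T[|P|] is empty. -/
variable {V : Type*}

theorem bucket_of_lt_prefLen [Fintype V] (E : V → V → Prop) (d : ℕ) (hd : d < prefLen E) :
    Set.ncard {v : V | indeg E v = d} = 1 := by
  classical
  unfold prefLen at hd
  split_ifs at hd with h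
  · exact h d hd
  · by_contra hne
    have hn : d ∉ {d : ℕ | d < Fintype.card V ∧ Set.ncard {v : V | indeg E v = d} ≠ 1} :=
      Nat.notMem_of_lt_sInf hd
    push Not at h
    obtain ⟨e, he⟩ := h
    have hs : sInf {d : ℕ | d < Fintype.card V ∧ Set.ncard {v : V | indeg E v = d} ≠ 1} ≤ e :=
      Nat.sInf_le he
    exact hn ⟨by omega, hne⟩

theorem prefLen_spec [Fintype V] (E : V → V → Prop) :
    prefLen E = Fintype.card V ∨ Set.ncard {v : V | indeg E v = prefLen E} ≠ 1 := by
  classical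
  by_cases h : ∀ d < Fintype.card V, Set.ncard {v : V | indeg E v = d} = 1
  · left
    unfold prefLen
    rw [if_pos h]
  · right
    have h2 : prefLen E =
        sInf {d : ℕ | d < Fintype.card V ∧ Set.ncard {v : V | indeg E v = d} ≠ 1} := by
      unfold prefLen
      rw [if_neg h]
    push Not at h
    obtain ⟨e, he⟩ := h
    have hm := Nat.sInf_mem
      (s := {d : ℕ | d < Fintype.card V ∧ Set.ncard {v : V | indeg E v = d} ≠ 1}) ⟨e, he⟩
    rw [← h2] at hm
    exact hm.2

theorem ncard_below [Fintype V] (E : V → V → Prop) (k : ℕ) (hk : k ≤ prefLen E) :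
    Set.ncard {v : V | indeg E v < k} = k := by
  induction k with
  | zero => simp
  | succ k ih =>
    have h1 : {v : V | indeg E v < k + 1} = {v : V | indeg E v < k} ∪ {v : V | indeg E v = k} := by
      ext v
      simp only [Set.mem_setOf_eq, Set.mem_union]
      omega
    rw [h1, Set.ncard_union_eq _ (Set.toFinite _) (Set.toFinite _), ih (by omega),
      bucket_of_lt_prefLen E k (by omega)]
    rw [Set.disjoint_left]
    intro v hv hv'
    simp only [Set.mem_setOf_eq] at hv hv'
    omega

theorem arc_of_le [Fintype V] (E : V → V → Prop) (hT : IsTournament E) (d : ℕ) :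
    ∀ u v : V, indeg E u = d → d < prefLen E → u ≠ v → d ≤ indeg E v → E u v := by
  induction d using Nat.strong_induction_on with
  | _ d ih =>
    intro u v hu hd huv hv
    have hsub : {w : V | indeg E w < d} ⊆ {w : V | E w u} := by
      intro w hw
      simp only [Set.mem_setOf_eq] at hw ⊢
      exact ih _ hw w u rfl (by omega) (by rintro rfl; omega) (by omega)
    have heq := Set.eq_of_subset_of_ncard_le hsub (by
      rw [ncard_below E d hd.le]
      exact hu.le) (Set.toFinite _)
    rw [hT.2 u v huv]
    intro hvu
    have : v ∈ {w : V | indeg E w < d} := by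
      rw [heq]
      exact hvu
    simp only [Set.mem_setOf_eq] at this
    omega

/-- For a non-empty tournament with prefix `P`: all arcs between `P` and its complement
are directed out of `P`; the induced subtournament on `P` has no back arcs; and if
`P ≠ V(T)` then the degree bucket at index `|P|` is empty. -/
theorem stmt4 [Fintype V] [Nonempty V] (E : V → V → Prop) (hT : IsTournament E) :
    (∀ u v : V, u ∈ prefSet E → v ∉ prefSet E → E u v) ∧
    (∀ u v : V, u ∈ prefSet E → v ∈ prefSet E → E u v →
      indegOn E (prefSet E) u < indegOn E (prefSet E) v) ∧
    (prefSet E ≠ Set.univ → {v : V | indeg E v = (prefSet E).ncard} = ∅) := by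
  have harc := arc_of_le E hT
  have hlt : ∀ u v : V, v ∈ prefSet E → E u v → indeg E u < indeg E v := by
    intro u v hv huv
    by_contra hcon
    have hne : u ≠ v := by
      rintro rfl
      exact hT.1 _ huv
    exact (hT.2 u v hne).1 huv (harc _ v u rfl hv hne.symm (by omega))
  have hP : ∀ u v : V, u ∈ prefSet E → v ∉ prefSet E → E u v := by
    intro u v hu hv
    have hne : u ≠ v := by
      rintro rfl
      exact hv hu
    simp only [prefSet, Set.mem_setOf_eq] at hu hv
    exact harc _ u v rfl hu hne (by omega)
  have hcard : (prefSet E).ncard = prefLen E := ncard_below E _ le_rfl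
  have hon : ∀ v ∈ prefSet E, indegOn E (prefSet E) v = indeg E v := by
    intro v hv
    unfold indegOn
    rw [indeg]
    congr 1
    ext u
    simp only [Set.mem_setOf_eq]
    exact ⟨fun h => h.2, fun h => ⟨lt_trans (hlt u v hv h) hv, h⟩⟩
  refine ⟨hP, ?_, ?_⟩
  · intro u v hu hv huv
    rw [hon u hu, hon v hv]
    exact hlt u v hv huv
  · intro hne
    rw [hcard]
    rcases prefLen_spec E with h | h
    · exfalso
      apply hne
      apply Set.eq_of_subset_of_ncard_le (Set.subset_univ _) _ (Set.toFinite _)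
      rw [hcard, h, Set.ncard_univ, Nat.card_eq_fintype_card]
    · have key : ∀ v, indeg E v = prefLen E → {x : V | E x v} = prefSet E := by
        intro v hv
        symm
        apply Set.eq_of_subset_of_ncard_le _ _ (Set.toFinite _)
        · intro u hu
          exact hP u v hu (by simp [prefSet, hv])
        · rw [hcard]
          exact hv.le
      by_contra hnon
      obtain ⟨v, hv⟩ := Set.nonempty_iff_ne_empty.2 hnon
      apply h
      rw [Set.ncard_eq_one]
      refine ⟨v, Set.eq_singleton_iff_unique_mem.2 ⟨hv, ?_⟩⟩
      intro w hw
      by_contra hwv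
      simp only [Set.mem_setOf_eq] at hv hw
      have nP : ∀ x y, indeg E x = prefLen E → indeg E y = prefLen E → ¬ E x y := by
        intro x y hx hy hxy
        have h1 : x ∈ prefSet E := by
          rw [← key y hy]
          exact hxy
        simp [prefSet, hx] at h1
      exact nP w v hw hv ((hT.2 w v hwv).2 (nP v w hv hw))
end

section
/- Let T be a tournament with prefix P, and let T' = T[V(T) \ P] be the tournament T with its prefix removed. Then T' contains no vertex of in-degree 0 (in T'). -/
variable {V : Type*}

theorem aux_card [Fintype V] (E : V → V → Prop) (p : ℕ)
    (h : ∀ d < p, Set.ncard {v : V | indeg E v = d} = 1) :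
    ∀ d ≤ p, Set.ncard {v : V | indeg E v < d} = d := by
  intro d
  induction d with
  | zero => intro _; simp
  | succ k ih =>
    intro hk
    have e : {v : V | indeg E v < k + 1} = {v : V | indeg E v < k} ∪ {v : V | indeg E v = k} := by
      ext v
      simp only [Set.mem_ofPred_eq, Set.mem_union]
      omega
    rw [e, Set.ncard_union_eq _ (Set.toFinite _) (Set.toFinite _), ih (by omega), h k (by omega)]
    rw [Set.disjoint_left]
    intro v h1 h2
    simp only [Set.mem_ofPred_eq] at h1 h2
    omega

theorem aux_dom [Fintype V] (E : V → V → Prop) (hT : IsTournament E) (p : ℕ)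
    (h : ∀ d < p, Set.ncard {v : V | indeg E v = d} = 1) :
    ∀ d < p, ∀ x y : V, indeg E x = d → d ≤ indeg E y → x ≠ y → E x y := by
  intro d
  induction d using Nat.strong_induction_on with
  | _ d ih =>
    intro hd x y hx hy hxy
    have hsub : {v : V | indeg E v < d} ⊆ {u : V | E u x} := by
      intro u hu
      simp only [Set.mem_ofPred_eq] at hu
      refine ih _ hu (by omega) u x rfl (by omega) ?_
      rintro rfl
      omega
    have heq : {v : V | indeg E v < d} = {u : V | E u x} := by
      apply Set.eq_of_subset_of_ncard_le hsub _ (Set.toFinite _)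
      rw [aux_card E p h d hd.le]
      exact hx.le
    rw [hT.2 x y hxy]
    intro hE
    have : y ∈ {v : V | indeg E v < d} := by rw [heq]; exact hE
    simp only [Set.mem_ofPred_eq] at this
    omega

theorem indeg_lt_card [Fintype V] (E : V → V → Prop) (hT : IsTournament E) (v : V) :
    indeg E v < Fintype.card V := by
  have := Set.ncard_lt_card (s := {u : V | E u v}) (by
    intro h
    exact hT.1 v (by have : v ∈ {u : V | E u v} := by rw [h]; trivial
                     exact this))
  rwa [Nat.card_eq_fintype_card] at this

/-- In the tournament obtained by removing the prefix, no vertex has in-degree 0. -/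
theorem stmt5 [Fintype V] (E : V → V → Prop) (hT : IsTournament E) :
    ∀ v : V, v ∉ prefSet E → indegOn E (prefSet E)ᶜ v ≠ 0 := by
  intro v hv h0
  by_cases hall : ∀ d < Fintype.card V, Set.ncard {v : V | indeg E v = d} = 1
  · apply hv
    have : prefLen E = Fintype.card V := by unfold prefLen; rw [if_pos hall]
    change indeg E v < prefLen E
    rw [this]
    exact indeg_lt_card E hT v
  have hp : prefLen E =
      sInf {d : ℕ | d < Fintype.card V ∧ Set.ncard {v : V | indeg E v = d} ≠ 1} := by
    unfold prefLen; rw [if_neg hall]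
  have hne : {d : ℕ | d < Fintype.card V ∧ Set.ncard {v : V | indeg E v = d} ≠ 1}.Nonempty := by
    push Not at hall
    exact hall
  have hmem := Nat.sInf_mem hne
  have hlow : ∀ d < prefLen E, Set.ncard {v : V | indeg E v = d} = 1 := by
    intro d hd
    rw [hp] at hd
    have h1 := Nat.notMem_of_lt_sInf hd
    by_contra h2
    exact h1 ⟨hd.trans hmem.1, h2⟩
  rw [← hp] at hmem
  have hcard := aux_card E _ hlow _ le_rfl
  have hdom : ∀ w : V, prefLen E ≤ indeg E w → {u : V | indeg E u < prefLen E} ⊆ {u : V | E u w} := by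
    intro w hw u hu
    simp only [Set.mem_ofPred_eq] at hu
    refine aux_dom E hT _ hlow _ hu u w rfl (by omega) ?_
    rintro rfl
    omega
  have hv' : prefLen E ≤ indeg E v := not_lt.mp hv
  have hin : {u : V | indeg E u < prefLen E} = {u : V | E u v} := by
    apply (hdom v hv').antisymm
    intro u hu
    by_contra hc
    unfold indegOn at h0
    rw [Set.ncard_eq_zero (Set.toFinite _)] at h0
    have : u ∈ {u : V | u ∈ (prefSet E)ᶜ ∧ E u v} := ⟨hc, hu⟩
    rw [h0] at this
    exact this
  have hvd : indeg E v = prefLen E := by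
    unfold indeg
    rw [← hin]
    exact hcard
  have hw : ∃ w, indeg E w = prefLen E ∧ w ≠ v := by
    by_contra hc
    push Not at hc
    apply hmem.2
    rw [Set.ncard_eq_one]
    refine ⟨v, Set.ext fun w => ⟨fun h => hc w h, ?_⟩⟩
    rintro rfl
    exact hvd
  obtain ⟨w, hw, hwv⟩ := hw
  have hin2 : {u : V | indeg E u < prefLen E} = {u : V | E u w} := by
    apply Set.eq_of_subset_of_ncard_le (hdom w hw.ge) _ (Set.toFinite _)
    rw [hcard]
    exact hw.le
  have a1 : ¬ E w v := fun h => by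
    have : w ∈ {u : V | indeg E u < prefLen E} := by rw [hin]; exact h
    simp only [Set.mem_ofPred_eq] at this
    omega
  have a2 : ¬ E v w := fun h => by
    have : v ∈ {u : V | indeg E u < prefLen E} := by rw [hin2]; exact h
    simp only [Set.mem_ofPred_eq] at this
    omega
  exact a1 ((hT.2 w v hwv).2 a2)
end

section
/- For every tournament T, the maximum size of a degree bucket satisfies maxdb(T) ≤ 8(√(ADT(T) + 1) + 1), where maxdb(T) = max over d of |{v ∈ V(T) : d_T(v) = d}|. -/
variable {V : Type*}

open Classical in
/-- Distinct integers: four times the sum of absolute values is at least `k^2 - k`. -/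
lemma aux_sum_abs (k : ℕ) : ∀ P : Finset ℤ, P.card = k →
    (k : ℤ) * k - k ≤ 4 * ∑ x ∈ P, |x| := by
  induction k with
  | zero =>
    intro P hP
    have : P = ∅ := Finset.card_eq_zero.mp hP
    subst this
    simp
  | succ k ih =>
    intro P hP
    have hex : ∃ x ∈ P, (k : ℤ) ≤ 2 * |x| := by
      by_contra hcon
      push Not at hcon
      have hsub : P ⊆ Finset.Icc (-(((k : ℤ) - 1) / 2)) (((k : ℤ) - 1) / 2) := by
        intro x hx
        have h := hcon x hx
        rw [Finset.mem_Icc]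
        have h1 := le_abs_self x
        have h2 := neg_abs_le x
        omega
      have hc := Finset.card_le_card hsub
      rw [hP, Int.card_Icc] at hc
      have hne : P.Nonempty := by
        rw [← Finset.card_pos]; omega
      obtain ⟨x, hx⟩ := hne
      have h := hcon x hx
      have h0 := abs_nonneg x
      omega
    obtain ⟨x, hx, hkx⟩ := hex
    have h1 := ih (P.erase x) (by rw [Finset.card_erase_of_mem hx, hP]; rfl)
    have h2 := Finset.add_sum_erase P (fun x : ℤ => |x|) hx
    push_cast
    nlinarith

open Classical in
/-- Back arcs of `R` inside `S` for the position function `p`. -/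
noncomputable def auxBack {W : Type*} (R : W → W → Prop) (S : Finset W) (p : W → ℕ) :
    Finset (W × W) :=
  (S ×ˢ S).filter fun z => R z.1 z.2 ∧ p z.2 < p z.1

open Classical in
/-- Ordered non-adjacent pairs of `R` inside `S`. -/
noncomputable def auxMiss {W : Type*} (R : W → W → Prop) (S : Finset W) :
    Finset (W × W) :=
  (S ×ˢ S).filter fun z => z.1 ≠ z.2 ∧ ¬ R z.1 z.2 ∧ ¬ R z.2 z.1

open Classical in
lemma aux_exists_vertex {W : Type*} (R : W → W → Prop) (S : Finset W) (hS : S.Nonempty) :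
    ∃ v ∈ S,
      ((S ×ˢ S).filter fun z => R v z.1 ∧ R z.1 z.2 ∧ (v ≠ z.2 ∧ ¬ R v z.2 ∧ ¬ R z.2 v)).card ≤
      ((S ×ˢ S).filter fun z => R z.1 v ∧ R v z.2 ∧
        (z.1 ≠ z.2 ∧ ¬ R z.1 z.2 ∧ ¬ R z.2 z.1)).card := by
  apply Finset.exists_le_of_sum_le hS
  simp only [Finset.card_filter, Finset.sum_product]
  rw [Finset.sum_comm]

open Classical in
/-- Chudnovsky-Seymour-Sullivan. -/
lemma aux_css {W : Type*} (R : W → W → Prop) (hasym : ∀ x y, R x y → ¬ R y x)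
    (htri : ∀ x y z, R x y → R y z → ¬ R z x) (n : ℕ) :
    ∀ S : Finset W, S.card = n → ∃ p : W → ℕ, Set.InjOn p S ∧
      2 * (auxBack R S p).card ≤ (auxMiss R S).card := by
  induction n using Nat.strong_induction_on with
  | _ n ih =>
  intro S hSn
  rcases S.eq_empty_or_nonempty with rfl | hS
  · exact ⟨fun _ => 0, by simp, by simp [auxBack]⟩
  obtain ⟨v, hv, hle⟩ := aux_exists_vertex R S hS
  set G := (S ×ˢ S).filter fun z => R v z.1 ∧ R z.1 z.2 ∧ (v ≠ z.2 ∧ ¬ R v z.2 ∧ ¬ R z.2 v)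
    with hG
  set H := (S ×ˢ S).filter fun z => R z.1 v ∧ R v z.2 ∧
        (z.1 ≠ z.2 ∧ ¬ R z.1 z.2 ∧ ¬ R z.2 z.1) with hH
  have hirr : ∀ x, ¬ R x x := fun x h => hasym x x h h
  set X1 := S.filter (fun x => R v x) with hX1
  set X2 := S.filter (fun x => x ≠ v ∧ ¬ R v x) with hX2
  have hc1 : X1.card < n := by
    rw [← hSn]
    apply Finset.card_lt_card
    rw [Finset.ssubset_iff_of_subset (Finset.filter_subset _ _)]
    exact ⟨v, hv, by simp [hX1, hirr]⟩
  have hc2 : X2.card < n := by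
    rw [← hSn]
    apply Finset.card_lt_card
    rw [Finset.ssubset_iff_of_subset (Finset.filter_subset _ _)]
    exact ⟨v, hv, by simp [hX2]⟩
  obtain ⟨p1, hp1, hb1⟩ := ih _ hc1 X1 rfl
  obtain ⟨p2, hp2, hb2⟩ := ih _ hc2 X2 rfl
  set N := X2.sup p2 + 1 with hN
  have hlt : ∀ x ∈ X2, p2 x < N := fun x hx => Nat.lt_succ_of_le (Finset.le_sup hx)
  set p : W → ℕ := fun x => if x = v then N else if R v x then p1 x + N + 1 else p2 x with hp
  have hpv : p v = N := by simp [hp]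
  have hpX1 : ∀ x ∈ X1, p x = p1 x + N + 1 := by
    intro x hx
    have hx' : R v x := (Finset.mem_filter.mp hx).2
    have : x ≠ v := by rintro rfl; exact hirr _ hx'
    simp [hp, this, hx']
  have hpX2 : ∀ x ∈ X2, p x = p2 x := by
    intro x hx
    have hx' := (Finset.mem_filter.mp hx).2
    simp [hp, hx'.1, hx'.2]
  have hcase : ∀ x ∈ S, x = v ∨ x ∈ X1 ∨ x ∈ X2 := by
    intro x hx
    by_cases h1 : x = v
    · exact Or.inl h1
    by_cases h2 : R v x
    · exact Or.inr (Or.inl (Finset.mem_filter.mpr ⟨hx, h2⟩))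
    · exact Or.inr (Or.inr (Finset.mem_filter.mpr ⟨hx, h1, h2⟩))
  refine ⟨p, ?_, ?_⟩
  · intro x hx y hy hxy
    rcases hcase x hx with rfl | h1 | h1 <;> rcases hcase y hy with h2 | h2 | h2
    · exact h2.symm
    · have := hpX1 y h2; omega
    · have := hpX2 y h2; have := hlt y h2; omega
    · subst h2; have := hpX1 x h1; omega
    · have a := hpX1 x h1; have b := hpX1 y h2
      exact hp1 h1 h2 (by omega)
    · have := hpX1 x h1; have := hpX2 y h2; have := hlt y h2; omega
    · subst h2; have := hpX2 x h1; have := hlt x h1; omega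
    · have := hpX2 x h1; have := hlt x h1; have := hpX1 y h2; omega
    · have a := hpX2 x h1; have b := hpX2 y h2
      exact hp2 h1 h2 (by omega)
  · have hback : auxBack R S p ⊆ (auxBack R X1 p1 ∪ auxBack R X2 p2) ∪ G := by
      rintro ⟨x, y⟩ hz
      simp only [auxBack, Finset.mem_filter, Finset.mem_product] at hz
      obtain ⟨⟨hx, hy⟩, hR, hpl⟩ := hz
      simp only [Finset.mem_union]
      rcases hcase x hx with h1 | h1 | h1 <;> rcases hcase y hy with h2 | h2 | h2
      · subst h1; subst h2; exact absurd hR (hirr _)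
      · subst h1; have := hpX1 y h2; omega
      · subst h1; exact absurd hR (Finset.mem_filter.mp h2).2.2
      · subst h2; exact absurd hR (hasym _ _ (Finset.mem_filter.mp h1).2)
      · left; left
        have a := hpX1 x h1; have b := hpX1 y h2
        simp only [auxBack, Finset.mem_filter, Finset.mem_product]
        exact ⟨⟨h1, h2⟩, hR, by omega⟩
      · right
        have a := (Finset.mem_filter.mp h1).2
        have b := (Finset.mem_filter.mp h2).2
        simp only [hG, Finset.mem_filter, Finset.mem_product]
        exact ⟨⟨hx, hy⟩, a, hR, b.1.symm, b.2, htri _ _ _ a hR⟩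
      · subst h2; have := hpX2 x h1; have := hlt x h1; omega
      · have := hpX2 x h1; have := hlt x h1; have := hpX1 y h2; omega
      · left; right
        have a := hpX2 x h1; have b := hpX2 y h2
        simp only [auxBack, Finset.mem_filter, Finset.mem_product]
        exact ⟨⟨h1, h2⟩, hR, by omega⟩
    have hB1 := Finset.card_le_card hback
    have hB2 := Finset.card_union_le (auxBack R X1 p1 ∪ auxBack R X2 p2) G
    have hB3 := Finset.card_union_le (auxBack R X1 p1) (auxBack R X2 p2)
    set H' := H.image Prod.swap with hH'
    have hH'c : H'.card = H.card := Finset.card_image_of_injective _ Prod.swap_injective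
    have hHm : ∀ z ∈ H, z.1 ∈ X2 ∧ z.2 ∈ X1 ∧ z ∈ auxMiss R S := by
      rintro ⟨b, a⟩ hz
      simp only [hH, Finset.mem_filter, Finset.mem_product] at hz
      obtain ⟨⟨hb, ha⟩, h1, h2, h3⟩ := hz
      refine ⟨Finset.mem_filter.mpr ⟨hb, ?_, hasym _ _ h1⟩, Finset.mem_filter.mpr ⟨ha, h2⟩, ?_⟩
      · rintro rfl; exact hirr _ h1
      · simp only [auxMiss, Finset.mem_filter, Finset.mem_product]
        exact ⟨⟨hb, ha⟩, h3⟩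
    have hHm' : ∀ z ∈ H', z.1 ∈ X1 ∧ z.2 ∈ X2 ∧ z ∈ auxMiss R S := by
      intro z hz
      obtain ⟨w, hw, rfl⟩ := Finset.mem_image.mp hz
      obtain ⟨a, b, c⟩ := hHm w hw
      refine ⟨b, a, ?_⟩
      simp only [auxMiss, Finset.mem_filter, Finset.mem_product, Prod.fst_swap,
        Prod.snd_swap] at c ⊢
      exact ⟨⟨c.1.2, c.1.1⟩, c.2.1.symm, c.2.2.2, c.2.2.1⟩
    have hMm : ∀ X : Finset W, X ⊆ S → ∀ z ∈ auxMiss R X, z.1 ∈ X ∧ z.2 ∈ X ∧ z ∈ auxMiss R S := by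
      intro X hX z hz
      simp only [auxMiss, Finset.mem_filter, Finset.mem_product] at hz ⊢
      exact ⟨hz.1.1, hz.1.2, ⟨hX hz.1.1, hX hz.1.2⟩, hz.2⟩
    have hM1 := hMm X1 (Finset.filter_subset _ _)
    have hM2 := hMm X2 (Finset.filter_subset _ _)
    have hdis : ∀ x, x ∈ X1 → x ∈ X2 → False := by
      intro x h1 h2
      exact (Finset.mem_filter.mp h2).2.2 (Finset.mem_filter.mp h1).2
    have hD1 : Disjoint (auxMiss R X1) (auxMiss R X2) := by
      rw [Finset.disjoint_left]
      intro z h1 h2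
      exact hdis _ (hM1 z h1).1 (hM2 z h2).1
    have hD2 : Disjoint H H' := by
      rw [Finset.disjoint_left]
      intro z h1 h2
      exact hdis _ (hHm' z h2).1 (hHm z h1).1
    have hD3 : Disjoint (auxMiss R X1 ∪ auxMiss R X2) (H ∪ H') := by
      rw [Finset.disjoint_left]
      intro z h1 h2
      rcases Finset.mem_union.mp h1 with h1 | h1 <;> rcases Finset.mem_union.mp h2 with h2 | h2
      · exact hdis _ (hM1 z h1).1 (hHm z h2).1
      · exact hdis _ (hM1 z h1).2.1 (hHm' z h2).2.1
      · exact hdis _ (hHm z h2).2.1 (hM2 z h1).2.1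
      · exact hdis _ (hHm' z h2).1 (hM2 z h1).1
    have hsub : (auxMiss R X1 ∪ auxMiss R X2) ∪ (H ∪ H') ⊆ auxMiss R S := by
      intro z hz
      simp only [Finset.mem_union] at hz
      rcases hz with (h | h) | (h | h)
      · exact (hM1 z h).2.2
      · exact (hM2 z h).2.2
      · exact (hHm z h).2.2
      · exact (hHm' z h).2.2
    have hC := Finset.card_le_card hsub
    rw [Finset.card_union_of_disjoint hD3, Finset.card_union_of_disjoint hD1,
      Finset.card_union_of_disjoint hD2] at hC
    omega

open Classical in
/-- A small set of arcs meeting every triangle. -/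
lemma aux_hitting {W : Type*} [Fintype W] (E : W → W → Prop) (hT : IsTournament E) :
    ∃ A : Finset (W × W), A.card ≤ 3 * ADT E ∧ (∀ z ∈ A, E z.1 z.2) ∧
      ∀ x y z, E x y ∧ (x, y) ∉ A → E y z ∧ (y, z) ∉ A → ¬ (E z x ∧ (z, x) ∉ A) := by
  set Q := {n : ℕ | ∃ F : Finset (W × W × W), IsADTFamily E F ∧ F.card = n} with hQ
  have hbdd : BddAbove Q := by
    refine ⟨Fintype.card (W × W × W), ?_⟩
    rintro n ⟨F, -, rfl⟩
    exact Finset.card_le_univ F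
  have hne : Q.Nonempty := ⟨0, ∅, ⟨by simp, by simp⟩, rfl⟩
  obtain ⟨F, hF, hFc⟩ := Nat.sSup_mem hne hbdd
  have hFc' : F.card = ADT E := hFc
  set arcs : W × W × W → Finset (W × W) :=
    fun t => {(t.1, t.2.1), (t.2.1, t.2.2), (t.2.2, t.1)} with harcs
  have hmem : ∀ t z, z ∈ arcs t ↔ z ∈ triArcs t := by
    intro t z
    simp [harcs, triArcs]
  refine ⟨F.biUnion arcs, ?_, ?_, ?_⟩
  · rw [← hFc', mul_comm]
    exact Finset.card_biUnion_le_card_mul _ _ _ fun t _ => Finset.card_le_three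
  · intro z hz
    obtain ⟨t, ht, hzt⟩ := Finset.mem_biUnion.mp hz
    have h := hF.1 t ht
    simp only [harcs, Finset.mem_insert, Finset.mem_singleton] at hzt
    rcases hzt with rfl | rfl | rfl
    · exact h.1
    · exact h.2.1
    · exact h.2.2
  · rintro x y z ⟨h1, n1⟩ ⟨h2, n2⟩ ⟨h3, n3⟩
    have hdj : ∀ s ∈ F, Disjoint (triArcs (x, y, z)) (triArcs s) := by
      intro s hs
      rw [Set.disjoint_left]
      intro w hw hws
      have hwA : w ∈ F.biUnion arcs := Finset.mem_biUnion.mpr ⟨s, hs, (hmem s w).mpr hws⟩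
      simp only [triArcs, Set.mem_insert_iff, Set.mem_singleton_iff] at hw
      rcases hw with rfl | rfl | rfl
      · exact n1 hwA
      · exact n2 hwA
      · exact n3 hwA
    have hnot : (x, y, z) ∉ F := by
      intro h
      apply n1
      exact Finset.mem_biUnion.mpr ⟨_, h, by simp [harcs]⟩
    have hfam : IsADTFamily E (insert (x, y, z) F) := by
      constructor
      · intro t ht
        rcases Finset.mem_insert.mp ht with rfl | ht
        · exact ⟨h1, h2, h3⟩
        · exact hF.1 t ht
      · intro t ht s hs hts
        rcases Finset.mem_insert.mp ht with rfl | ht <;>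
          rcases Finset.mem_insert.mp hs with rfl | hs
        · exact absurd rfl hts
        · exact hdj s hs
        · exact (hdj t ht).symm
        · exact hF.2 t ht s hs hts
    have hle : F.card + 1 ≤ sSup Q :=
      le_csSup hbdd ⟨_, hfam, Finset.card_insert_of_notMem hnot⟩
    omega

open Classical in
/-- A good ordering. -/
lemma aux_order {W : Type*} [Fintype W] (E : W → W → Prop) (hT : IsTournament E) :
    ∃ p : W → ℕ, Function.Injective p ∧ (auxBack E Finset.univ p).card ≤ 6 * ADT E := by
  obtain ⟨A, hAc, hAE, hA⟩ := aux_hitting E hT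
  have hasymE : ∀ x y, E x y → ¬ E y x := by
    intro x y h
    by_cases hxy : x = y
    · subst hxy; exact absurd h (hT.1 x)
    · exact (hT.2 x y hxy).mp h
  obtain ⟨p, hp, hb⟩ := aux_css (fun x y => E x y ∧ (x, y) ∉ A)
    (fun x y h h' => hasymE x y h.1 h'.1) hA _ Finset.univ rfl
  refine ⟨p, fun x y h => hp (by simp) (by simp) h, ?_⟩
  have hmiss : auxMiss (fun x y => E x y ∧ (x, y) ∉ A) Finset.univ ⊆ A ∪ A.image Prod.swap := by
    rintro ⟨x, y⟩ hz
    simp only [auxMiss, Finset.mem_filter] at hz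
    obtain ⟨-, hne, h1, h2⟩ := hz
    by_cases hE : E x y
    · apply Finset.mem_union_left
      by_contra hcon
      exact h1 ⟨hE, hcon⟩
    · have hE' : E y x := (hT.2 y x hne.symm).mpr hE
      apply Finset.mem_union_right
      refine Finset.mem_image.mpr ⟨(y, x), ?_, rfl⟩
      by_contra hcon
      exact h2 ⟨hE', hcon⟩
  have hback : auxBack E Finset.univ p ⊆
      auxBack (fun x y => E x y ∧ (x, y) ∉ A) Finset.univ p ∪ A := by
    rintro ⟨x, y⟩ hz
    simp only [auxBack, Finset.mem_filter] at hz
    by_cases hxy : (x, y) ∈ A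
    · exact Finset.mem_union_right _ hxy
    · apply Finset.mem_union_left
      simp only [auxBack, Finset.mem_filter]
      exact ⟨hz.1, ⟨hz.2.1, hxy⟩, hz.2.2⟩
  have c1 := Finset.card_le_card hmiss
  have c2 := Finset.card_union_le A (A.image Prod.swap)
  have c3 : (A.image Prod.swap).card ≤ A.card := Finset.card_image_le
  have c4 := Finset.card_le_card hback
  have c5 := Finset.card_union_le (auxBack (fun x y => E x y ∧ (x, y) ∉ A) Finset.univ p) A
  omega

open Classical in
lemma aux_bucket {W : Type*} [Fintype W] (E : W → W → Prop) (hT : IsTournament E) (d : ℕ) :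
    (Set.ncard {v : W | indeg E v = d} : ℤ) * (Set.ncard {v : W | indeg E v = d} : ℤ)
      - (Set.ncard {v : W | indeg E v = d} : ℤ) ≤ 48 * (ADT E : ℤ) := by
  obtain ⟨p, hp, hb⟩ := aux_order E hT
  set B : Finset W := Finset.univ.filter fun v => indeg E v = d with hB
  have hBc : Set.ncard {v : W | indeg E v = d} = B.card := by
    rw [← Set.ncard_coe_finset]
    congr 1
    ext v
    simp [hB]
  rw [hBc]
  set q : W → ℕ := fun v => (Finset.univ.filter fun u => p u < p v).card with hq
  have hqmono : ∀ u v, p u < p v → q u < q v := by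
    intro u v huv
    apply Finset.card_lt_card
    rw [Finset.ssubset_iff_of_subset]
    · exact ⟨u, by simp [huv], by simp⟩
    · intro w hw
      simp only [Finset.mem_filter, Finset.mem_univ, true_and] at hw ⊢
      omega
  have hqinj : Function.Injective q := by
    intro u v h
    apply hp
    rcases lt_trichotomy (p u) (p v) with h1 | h1 | h1
    · have := hqmono _ _ h1; omega
    · exact h1
    · have := hqmono _ _ h1; omega
  set bi : W → ℕ := fun v => (Finset.univ.filter fun u => E u v ∧ p v < p u).card with hbi
  set bo : W → ℕ := fun v => (Finset.univ.filter fun u => E v u ∧ p u < p v).card with hbo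
  have hind : ∀ v, indeg E v = (Finset.univ.filter fun u => E u v).card := by
    intro v
    rw [indeg, ← Set.ncard_coe_finset]
    congr 1
    ext u
    simp
  have h1 : ∀ v, indeg E v ≤ q v + bi v := by
    intro v
    rw [hind]
    refine le_trans (Finset.card_le_card ?_) (Finset.card_union_le _ _)
    intro u hu
    simp only [Finset.mem_union, Finset.mem_filter, Finset.mem_univ, true_and] at hu ⊢
    rcases lt_trichotomy (p u) (p v) with h | h | h
    · exact Or.inl h
    · have := hp h
      subst this
      exact absurd hu (hT.1 u)
    · exact Or.inr ⟨hu, h⟩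
  have h2 : ∀ v, q v ≤ indeg E v + bo v := by
    intro v
    rw [hind]
    refine le_trans (Finset.card_le_card ?_) (Finset.card_union_le _ _)
    intro u hu
    simp only [Finset.mem_union, Finset.mem_filter, Finset.mem_univ, true_and] at hu ⊢
    by_cases hE : E u v
    · exact Or.inl hE
    · have hne : v ≠ u := by rintro rfl; omega
      exact Or.inr ⟨(hT.2 v u hne).mpr hE, hu⟩
  have hsbi : ∑ v, bi v = (auxBack E Finset.univ p).card := by
    simp only [hbi, auxBack, Finset.card_filter, Finset.sum_product]
    rw [Finset.sum_comm]
  have hsbo : ∑ v, bo v = (auxBack E Finset.univ p).card := by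
    simp only [hbo, auxBack, Finset.card_filter, Finset.sum_product]
  set g : W → ℤ := fun v => (q v : ℤ) - d with hg
  have hginj : Function.Injective g := by
    intro u v h
    apply hqinj
    simp only [hg] at h
    omega
  have hmain := aux_sum_abs B.card (B.image g) (Finset.card_image_of_injective _ hginj)
  rw [Finset.sum_image (fun a _ b _ h => hginj h)] at hmain
  have hle : ∑ v ∈ B, |g v| ≤ ∑ v ∈ B, ((bi v : ℤ) + bo v) := by
    apply Finset.sum_le_sum
    intro v hv
    have hd : indeg E v = d := (Finset.mem_filter.mp hv).2
    have a := h1 v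
    have b := h2 v
    rw [abs_le]
    simp only [hg]
    constructor <;> omega
  have hle2 : ∑ v ∈ B, ((bi v : ℤ) + bo v) ≤ ∑ v, ((bi v : ℤ) + bo v) := by
    apply Finset.sum_le_sum_of_subset_of_nonneg (Finset.subset_univ _)
    intro v _ _
    positivity
  have hsum : ∑ v, ((bi v : ℤ) + bo v) = 2 * ((auxBack E Finset.univ p).card : ℤ) := by
    rw [Finset.sum_add_distrib, ← Nat.cast_sum, ← Nat.cast_sum, hsbi, hsbo]
    ring
  have hb' : ((auxBack E Finset.univ p).card : ℤ) ≤ 6 * (ADT E : ℤ) := by exact_mod_cast hb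
  linarith

/-- maxdb(T) ≤ 8(√(ADT(T) + 1) + 1). -/
theorem stmt6 [Fintype V] (E : V → V → Prop) (hT : IsTournament E) :
    (maxdb E : ℝ) ≤ 8 * (Real.sqrt ((ADT E : ℝ) + 1) + 1) := by
  have hkey : (maxdb E : ℤ) * (maxdb E : ℤ) - (maxdb E : ℤ) ≤ 48 * (ADT E : ℤ) := by
    rcases (Finset.range (Fintype.card V)).eq_empty_or_nonempty with h | h
    · have : maxdb E = 0 := by simp only [maxdb, h, Finset.sup_empty]; rfl
      rw [this]
      simp
    · obtain ⟨d, -, hd⟩ := Finset.exists_mem_eq_sup _ h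
        (fun d => Set.ncard {v : V | indeg E v = d})
      have : maxdb E = Set.ncard {v : V | indeg E v = d} := hd
      rw [this]
      exact aux_bucket E hT d
  have hk : (maxdb E : ℝ) * (maxdb E : ℝ) - (maxdb E : ℝ) ≤ 48 * (ADT E : ℝ) := by
    exact_mod_cast hkey
  have hs := Real.sq_sqrt (show (0 : ℝ) ≤ (ADT E : ℝ) + 1 by positivity)
  have hs0 := Real.sqrt_nonneg ((ADT E : ℝ) + 1)
  have hm : (0 : ℝ) ≤ (ADT E : ℝ) := by positivity
  by_contra hcon
  push Not at hcon
  nlinarith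
end

section
/- Let T be an n-vertex tournament and let Empty = {d ∈ {0,…,n−1} : DB_T[d] = ∅} be its empty set. Then |Empty| ≤ 12(ADT(T) + 1). -/
variable {V : Type*}

open Classical in
/-- Combining orders of two parts, the second placed before the first. -/
lemma css_split (R : V → V → Prop) (S T : Finset V) (hST : Disjoint S T)
    (hcross : ((S ×ˢ T).filter fun p => R p.1 p.2).card ≤
      ((S ×ˢ T).filter fun p => p.1 ≠ p.2 ∧ ¬ R p.1 p.2 ∧ ¬ R p.2 p.1).card)
    (hS : ∃ f : V → ℕ, Set.InjOn f S ∧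
      2 * ((S ×ˢ S).filter fun p => R p.1 p.2 ∧ f p.2 < f p.1).card ≤
        ((S ×ˢ S).filter fun p => p.1 ≠ p.2 ∧ ¬ R p.1 p.2 ∧ ¬ R p.2 p.1).card)
    (hT : ∃ f : V → ℕ, Set.InjOn f T ∧
      2 * ((T ×ˢ T).filter fun p => R p.1 p.2 ∧ f p.2 < f p.1).card ≤
        ((T ×ˢ T).filter fun p => p.1 ≠ p.2 ∧ ¬ R p.1 p.2 ∧ ¬ R p.2 p.1).card) :
    ∃ f : V → ℕ, Set.InjOn f (S ∪ T : Finset V) ∧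
      2 * (((S ∪ T) ×ˢ (S ∪ T)).filter fun p => R p.1 p.2 ∧ f p.2 < f p.1).card ≤
        (((S ∪ T) ×ˢ (S ∪ T)).filter
          fun p => p.1 ≠ p.2 ∧ ¬ R p.1 p.2 ∧ ¬ R p.2 p.1).card := by
  obtain ⟨f, hf, hfc⟩ := hS
  obtain ⟨g, hg, hgc⟩ := hT
  have hM : ∀ t ∈ T, g t < T.sup g + 1 := fun t ht => Nat.lt_succ_of_le (Finset.le_sup ht)
  set M := T.sup g + 1
  have hd : ∀ x, x ∈ S → x ∈ T → False := fun x h1 h2 => Finset.disjoint_left.mp hST h1 h2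
  refine ⟨fun x => if x ∈ S then f x + M else g x, ?_, ?_⟩
  · intro x hx y hy hxy
    simp only [Finset.coe_union, Set.mem_union, Finset.mem_coe] at hx hy
    have h1 := hM x
    have h2 := hM y
    have h3 := @hf x
    have h4 := @hg x
    simp only [Finset.mem_coe] at h3 h4
    dsimp only at hxy
    split_ifs at hxy with a b b
    · exact h3 a b (by omega)
    · have := h2 (by tauto); omega
    · have := h1 (by tauto); omega
    · exact h4 (by tauto) (by tauto) hxy
  · set h : V → ℕ := fun x => if x ∈ S then f x + M else g x with hh
    have hhS : ∀ x ∈ S, h x = f x + M := fun x hx => by simp [hh, hx]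
    have hhT : ∀ x ∈ T, h x = g x := fun x hx => by
      have : x ∉ S := fun h' => hd x h' hx
      simp [hh, this]
    have hup : (((S ∪ T) ×ˢ (S ∪ T)).filter fun p => R p.1 p.2 ∧ h p.2 < h p.1) ⊆
        ((S ×ˢ S).filter fun p => R p.1 p.2 ∧ f p.2 < f p.1) ∪
        ((T ×ˢ T).filter fun p => R p.1 p.2 ∧ g p.2 < g p.1) ∪
        ((S ×ˢ T).filter fun p => R p.1 p.2) := by
      rintro ⟨x, y⟩ hp
      simp only [Finset.mem_filter, Finset.mem_product, Finset.mem_union] at hp ⊢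
      obtain ⟨⟨hx, hy⟩, hr, hlt⟩ := hp
      rcases hx with hx | hx <;> rcases hy with hy | hy
      · rw [hhS x hx, hhS y hy] at hlt
        left; left; exact ⟨⟨hx, hy⟩, hr, by omega⟩
      · right; exact ⟨⟨hx, hy⟩, hr⟩
      · rw [hhT x hx, hhS y hy] at hlt
        have := hM x hx; omega
      · rw [hhT x hx, hhT y hy] at hlt
        left; right; exact ⟨⟨hx, hy⟩, hr, by omega⟩
    have hup' := (Finset.card_le_card hup).trans
      ((Finset.card_union_le _ _).trans (Nat.add_le_add_right (Finset.card_union_le _ _) _))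
    have hswap : ((S ×ˢ T).filter fun p => p.1 ≠ p.2 ∧ ¬ R p.1 p.2 ∧ ¬ R p.2 p.1).card ≤
        ((T ×ˢ S).filter fun p => p.1 ≠ p.2 ∧ ¬ R p.1 p.2 ∧ ¬ R p.2 p.1).card := by
      apply Finset.card_le_card_of_injOn Prod.swap
      · rintro ⟨x, y⟩ hp
        simp only [Finset.coe_filter, Finset.mem_product, Set.mem_ofPred_eq,
          Prod.swap] at hp ⊢
        exact ⟨⟨hp.1.2, hp.1.1⟩, fun h => hp.2.1 h.symm, hp.2.2.2, hp.2.2.1⟩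
      · exact Prod.swap_injective.injOn
    have hlow : ∀ N : V × V → Prop, ((S ×ˢ S).filter N).card + ((T ×ˢ T).filter N).card +
        ((S ×ˢ T).filter N).card + ((T ×ˢ S).filter N).card =
        (((S ∪ T) ×ˢ (S ∪ T)).filter N).card := by
      clear hswap hup' hgc hfc hcross
      intro N
      rw [← Finset.card_union_of_disjoint, ← Finset.card_union_of_disjoint,
        ← Finset.card_union_of_disjoint]
      · congr 1
        ext ⟨x, y⟩
        simp only [Finset.mem_filter, Finset.mem_product, Finset.mem_union]
        tauto
      all_goals
        rw [Finset.disjoint_left]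
        rintro ⟨x, y⟩
        simp only [Finset.mem_filter, Finset.mem_product, Finset.mem_union]
        have h1 := hd x
        have h2 := hd y
        clear hd
        tauto
    have hlow' : ((S ×ˢ S).filter fun p => p.1 ≠ p.2 ∧ ¬ R p.1 p.2 ∧ ¬ R p.2 p.1).card +
        ((T ×ˢ T).filter fun p => p.1 ≠ p.2 ∧ ¬ R p.1 p.2 ∧ ¬ R p.2 p.1).card +
        ((S ×ˢ T).filter fun p => p.1 ≠ p.2 ∧ ¬ R p.1 p.2 ∧ ¬ R p.2 p.1).card +
        ((T ×ˢ S).filter fun p => p.1 ≠ p.2 ∧ ¬ R p.1 p.2 ∧ ¬ R p.2 p.1).card =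
        (((S ∪ T) ×ˢ (S ∪ T)).filter fun p => p.1 ≠ p.2 ∧ ¬ R p.1 p.2 ∧ ¬ R p.2 p.1).card := by
      convert hlow (fun p => p.1 ≠ p.2 ∧ ¬ R p.1 p.2 ∧ ¬ R p.2 p.1)
    omega

open Classical in
/-- Existence of a good splitting vertex, by double counting induced 2-paths. -/
lemma css_vertex (R : V → V → Prop) (h2 : ∀ a b, R a b → ¬ R b a)
    (h3 : ∀ a b c, R a b → R b c → ¬ R c a) (A : Finset V) (hA : A.Nonempty) :
    ∃ v ∈ A, (((A.filter fun x => R v x) ×ˢ (A.filter fun x => ¬ R v x)).filter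
        fun p => R p.1 p.2).card ≤
      (((A.filter fun x => R v x) ×ˢ (A.filter fun x => ¬ R v x)).filter
        fun p => p.1 ≠ p.2 ∧ ¬ R p.1 p.2 ∧ ¬ R p.2 p.1).card := by
  apply Finset.exists_le_of_sum_le hA
  rw [← Finset.card_sigma, ← Finset.card_sigma]
  apply Finset.card_le_card_of_injOn (fun q => ⟨q.2.1, (q.2.2, q.1)⟩)
  · rintro ⟨v, x, y⟩ hq
    simp only [Finset.mem_coe, Finset.mem_sigma, Finset.mem_filter, Finset.mem_product] at hq ⊢
    obtain ⟨hv, ⟨⟨hx, hvx⟩, hy, hvy⟩, hxy⟩ := hq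
    refine ⟨hx, ⟨⟨hy, hxy⟩, hv, h2 _ _ hvx⟩, ?_, h3 _ _ _ hvx hxy, hvy⟩
    rintro rfl
    exact h2 _ _ hvx hxy
  · rintro ⟨v, x, y⟩ _ ⟨v', x', y'⟩ _ h
    simp only [Sigma.mk.injEq, heq_eq_eq, Prod.mk.injEq] at h ⊢
    tauto

open Classical in
/-- Chudnovsky–Seymour–Sullivan: a 3-free digraph has a feedback arc set no larger than its
number of nonadjacent pairs. -/
lemma css_s7 (R : V → V → Prop) (h2 : ∀ a b, R a b → ¬ R b a)
    (h3 : ∀ a b c, R a b → R b c → ¬ R c a) (A : Finset V) :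
    ∃ f : V → ℕ, Set.InjOn f A ∧
      2 * ((A ×ˢ A).filter fun p => R p.1 p.2 ∧ f p.2 < f p.1).card ≤
        ((A ×ˢ A).filter fun p => p.1 ≠ p.2 ∧ ¬ R p.1 p.2 ∧ ¬ R p.2 p.1).card := by
  induction A using Finset.strongInduction with
  | H A ih =>
  by_cases hc : A.card ≤ 1
  · refine ⟨fun _ => 0, fun x hx y hy _ => Finset.card_le_one.mp hc x hx y hy, by simp⟩
  push Not at hc
  have key : ∃ S ⊂ A, S.Nonempty ∧ ((S ×ˢ (A \ S)).filter fun p => R p.1 p.2).card ≤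
      ((S ×ˢ (A \ S)).filter fun p => p.1 ≠ p.2 ∧ ¬ R p.1 p.2 ∧ ¬ R p.2 p.1).card := by
    by_cases hs : ∃ v ∈ A, ∀ x ∈ A, ¬ R v x
    · obtain ⟨v, hv, hs⟩ := hs
      refine ⟨{v}, ?_, by simp, ?_⟩
      · refine Finset.ssubset_iff_subset_ne.mpr ⟨by simpa using hv, ?_⟩
        rintro rfl
        simp at hc
      · rw [Finset.card_eq_zero.mpr]
        · exact Nat.zero_le _
        · rw [Finset.filter_eq_empty_iff]
          rintro ⟨x, y⟩ hp
          simp only [Finset.mem_product, Finset.mem_singleton, Finset.mem_sdiff] at hp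
          rw [hp.1]
          exact hs y hp.2.1
    · push Not at hs
      obtain ⟨v, hv, hle⟩ := css_vertex R h2 h3 A (Finset.card_pos.mp (by omega))
      obtain ⟨x, hx, hvx⟩ := hs v hv
      refine ⟨A.filter fun x => R v x, ?_, ⟨x, by simp [hx, hvx]⟩, ?_⟩
      · rw [Finset.filter_ssubset]
        exact ⟨v, hv, fun h => h2 _ _ h h⟩
      · rw [← Finset.filter_not]
        exact hle
  obtain ⟨S, hSA, hSn, hle⟩ := key
  have := css_split R S (A \ S) Finset.disjoint_sdiff hle (ih S hSA)
    (ih _ (Finset.sdiff_ssubset hSA.1 hSn))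
  rwa [Finset.union_sdiff_of_subset hSA.1] at this

open Classical in
/-- Empty buckets are controlled by the number of back arcs of any linear order. -/
lemma empty_le_back [Fintype V] (E : V → V → Prop) (hT : IsTournament E) (f : V → ℕ)
    (hf : Function.Injective f) :
    Set.ncard (emptyBuckets E) ≤
      2 * ((Finset.univ : Finset (V × V)).filter fun p => E p.1 p.2 ∧ f p.2 < f p.1).card := by
  set B := (Finset.univ : Finset (V × V)).filter fun p => E p.1 p.2 ∧ f p.2 < f p.1 with hB
  set pos : V → ℕ := fun v => ((Finset.univ : Finset V).filter fun u => f u < f v).card with hpos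
  have hmono : ∀ u v, f u < f v → pos u < pos v := by
    intro u v huv
    apply Finset.card_lt_card
    rw [Finset.ssubset_iff_of_subset]
    · exact ⟨u, by simp [huv], by simp⟩
    · intro w hw
      simp only [Finset.mem_filter, Finset.mem_univ, true_and] at hw ⊢
      omega
  have hinj : Function.Injective pos := by
    intro u v h
    rcases lt_trichotomy (f u) (f v) with h' | h' | h'
    · have := hmono _ _ h'; omega
    · exact hf h'
    · have := hmono _ _ h'; omega
  have hlt : ∀ v, pos v < Fintype.card V := by
    intro v
    rw [← Finset.card_univ]
    apply Finset.card_lt_card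
    rw [Finset.filter_ssubset]
    exact ⟨v, by simp, by simp⟩
  have himg : Finset.univ.image pos = Finset.range (Fintype.card V) := by
    apply Finset.eq_of_subset_of_card_le
    · intro d hd
      simp only [Finset.mem_image, Finset.mem_univ, true_and] at hd
      obtain ⟨v, rfl⟩ := hd
      simpa using hlt v
    · rw [Finset.card_image_of_injective _ hinj]
      simp
  have hsub : emptyBuckets E ⊆
      (((B.image Prod.fst ∪ B.image Prod.snd).image pos : Finset ℕ) : Set ℕ) := by
    rintro d ⟨hd, he⟩
    have hd' : d ∈ Finset.univ.image pos := by rw [himg]; simpa using hd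
    simp only [Finset.mem_image, Finset.mem_univ, true_and] at hd'
    obtain ⟨v, rfl⟩ := hd'
    rw [Finset.mem_coe]
    apply Finset.mem_image_of_mem
    by_contra hv
    have hno1 : ∀ u, E v u → ¬ f u < f v := by
      intro u h1 h2
      apply hv
      apply Finset.mem_union_left
      exact Finset.mem_image.mpr ⟨(v, u), by simp [hB, h1, h2], rfl⟩
    have hno2 : ∀ u, E u v → ¬ f v < f u := by
      intro u h1 h2
      apply hv
      apply Finset.mem_union_right
      exact Finset.mem_image.mpr ⟨(u, v), by simp [hB, h1, h2], rfl⟩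
    have hmem : v ∈ {w : V | indeg E w = pos v} := by
      show indeg E v = pos v
      have hs : {u : V | E u v} =
          (((Finset.univ : Finset V).filter fun u => f u < f v : Finset V) : Set V) := by
        ext u
        simp only [Set.mem_ofPred_eq, Finset.coe_filter, Finset.mem_univ, true_and]
        constructor
        · intro h
          have h1 := hno2 u h
          have hne : f u ≠ f v := fun h' => by
            have := hf h'
            subst this
            exact hT.1 _ h
          omega
        · intro h
          have hne : u ≠ v := by rintro rfl; omega
          rw [hT.2 u v hne]
          exact fun h' => hno1 u h' h
      rw [indeg, hs, Set.ncard_coe_finset]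
    rw [he] at hmem
    exact hmem
  calc Set.ncard (emptyBuckets E) ≤ _ := Set.ncard_le_ncard hsub (Finset.finite_toSet _)
    _ = _ := Set.ncard_coe_finset _
    _ ≤ _ := Finset.card_image_le
    _ ≤ _ := Finset.card_union_le _ _
    _ ≤ B.card + B.card := Nat.add_le_add Finset.card_image_le Finset.card_image_le
    _ = 2 * B.card := by omega

/-- The empty set of a tournament has size at most 12(ADT(T) + 1). -/
theorem stmt7 [Fintype V] (E : V → V → Prop) (hT : IsTournament E) :
    Set.ncard (emptyBuckets E) ≤ 12 * (ADT E + 1) := by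
  classical
  have hbdd : BddAbove {n : ℕ | ∃ F : Finset (V × V × V), IsADTFamily E F ∧ F.card = n} := by
    refine ⟨Fintype.card (V × V × V), ?_⟩
    rintro n ⟨F, _, rfl⟩
    exact Finset.card_le_univ F
  have hne : {n : ℕ | ∃ F : Finset (V × V × V), IsADTFamily E F ∧ F.card = n}.Nonempty :=
    ⟨0, ∅, by simp [IsADTFamily], rfl⟩
  obtain ⟨F, hF, hFc⟩ := Nat.sSup_mem hne hbdd
  change F.card = ADT E at hFc
  set C : Finset (V × V) := F.biUnion fun t =>
    {(t.1, t.2.1), (t.2.1, t.2.2), (t.2.2, t.1)} with hC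
  have hCc : C.card ≤ 3 * F.card := by
    rw [mul_comm]
    exact Finset.card_biUnion_le_card_mul _ _ _ fun t _ => Finset.card_le_three
  have hCm : ∀ p, p ∈ C ↔ ∃ t ∈ F, p ∈ triArcs t := by
    intro p
    simp [hC, triArcs]
  have hasym : ∀ a b, E a b → ¬ E b a := by
    intro a b h
    by_cases hab : a = b
    · subst hab; exact absurd h (hT.1 _)
    · exact (hT.2 a b hab).mp h
  set R : V → V → Prop := fun u v => E u v ∧ (u, v) ∉ C with hR
  have h2 : ∀ a b, R a b → ¬ R b a := fun a b h h' => hasym _ _ h.1 h'.1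
  have h3 : ∀ a b c, R a b → R b c → ¬ R c a := by
    intro a b c hab hbc hca
    have hdis : ∀ s ∈ F, Disjoint (triArcs (a, b, c)) (triArcs s) := by
      intro s hs
      rw [Set.disjoint_left]
      intro p hp hps
      have hpC : p ∈ C := (hCm p).mpr ⟨s, hs, hps⟩
      simp only [triArcs, Set.mem_insert_iff, Set.mem_singleton_iff] at hp
      rcases hp with rfl | rfl | rfl
      · exact hab.2 hpC
      · exact hbc.2 hpC
      · exact hca.2 hpC
    have hnot : (a, b, c) ∉ F := fun h =>
      hab.2 ((hCm _).mpr ⟨_, h, by simp [triArcs]⟩)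
    have hfam : IsADTFamily E (insert (a, b, c) F) := by
      constructor
      · intro t ht
        rcases Finset.mem_insert.mp ht with rfl | ht
        · exact ⟨hab.1, hbc.1, hca.1⟩
        · exact hF.1 t ht
      · intro t ht s hs hts
        rcases Finset.mem_insert.mp ht with rfl | ht <;>
          rcases Finset.mem_insert.mp hs with rfl | hs
        · exact absurd rfl hts
        · exact hdis s hs
        · exact (hdis t ht).symm
        · exact hF.2 t ht s hs hts
    have hle : (insert (a, b, c) F).card ≤ ADT E := le_csSup hbdd ⟨_, hfam, rfl⟩
    rw [Finset.card_insert_of_notMem hnot] at hle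
    omega
  obtain ⟨f, hf, hfc⟩ := css_s7 R h2 h3 Finset.univ
  have hf' : Function.Injective f := fun x y h => hf (by simp) (by simp) h
  have h1 := empty_le_back E hT f hf'
  have hb1 : ((Finset.univ : Finset (V × V)).filter fun p => E p.1 p.2 ∧ f p.2 < f p.1).card ≤
      (((Finset.univ : Finset V) ×ˢ (Finset.univ : Finset V)).filter
        fun p => R p.1 p.2 ∧ f p.2 < f p.1).card + C.card := by
    refine (Finset.card_le_card ?_).trans (Finset.card_union_le _ _)
    rintro ⟨x, y⟩ hp
    simp only [Finset.mem_filter, Finset.mem_univ, true_and, Finset.mem_union,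
      Finset.mem_product, hR] at hp ⊢
    tauto
  have hb2 : (((Finset.univ : Finset V) ×ˢ (Finset.univ : Finset V)).filter
      fun p => p.1 ≠ p.2 ∧ ¬ R p.1 p.2 ∧ ¬ R p.2 p.1).card ≤ C.card + C.card := by
    have : (((Finset.univ : Finset V) ×ˢ (Finset.univ : Finset V)).filter
      fun p => p.1 ≠ p.2 ∧ ¬ R p.1 p.2 ∧ ¬ R p.2 p.1) ⊆ C ∪ C.image Prod.swap := by
      rintro ⟨x, y⟩ hp
      simp only [Finset.mem_filter, Finset.mem_univ, true_and, Finset.mem_union,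
        Finset.mem_product, hR] at hp ⊢
      obtain ⟨hxy, ha, hb⟩ := hp
      have hsw : (y, x) ∈ C → (x, y) ∈ C.image Prod.swap := fun h =>
        Finset.mem_image.mpr ⟨(y, x), h, rfl⟩
      have := hT.2 x y hxy
      tauto
    exact (Finset.card_le_card this).trans ((Finset.card_union_le _ _).trans
      (Nat.add_le_add_left Finset.card_image_le _))
  have hfc' : 2 * (((Finset.univ : Finset V) ×ˢ (Finset.univ : Finset V)).filter
        fun p => R p.1 p.2 ∧ f p.2 < f p.1).card ≤
      (((Finset.univ : Finset V) ×ˢ (Finset.univ : Finset V)).filter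
        fun p => p.1 ≠ p.2 ∧ ¬ R p.1 p.2 ∧ ¬ R p.2 p.1).card := by
    convert hfc
  omega
end

section
/- Let T be a tournament with prefix P and let T' = T[V(T) \ P]. Then the minimum in-degree of T' satisfies mindeg(T') ≤ 12(ADT(T) + 1). -/
variable {V : Type*}

open Classical in
/-- Some vertex of a nonempty set has in-degree at most half inside the set. -/
theorem exists_small_indeg (E : V → V → Prop) (hT : IsTournament E) (S : Finset V)
    (hS : S.Nonempty) : ∃ u ∈ S, 2 * (S.filter fun w => E w u).card ≤ S.card := by
  by_contra hcon
  push Not at hcon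
  have h1 : ∑ u ∈ S, (S.filter fun w => E w u).card = ∑ u ∈ S, (S.filter fun w => E u w).card :=
    (Finset.sum_card_bipartiteAbove_eq_sum_card_bipartiteBelow (s := S) (t := S) E).symm
  have h2 : ∀ u ∈ S, (S.filter fun w => E w u).card + (S.filter fun w => E u w).card ≤ S.card := by
    intro u _
    rw [← Finset.card_union_of_disjoint]
    · apply Finset.card_le_card
      intro w hw
      simp only [Finset.mem_union, Finset.mem_filter] at hw
      tauto
    · rw [Finset.disjoint_left]
      intro w hw hw'
      simp only [Finset.mem_filter] at hw hw'
      by_cases h : w = u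
      · subst h
        exact hT.1 _ hw.2
      · exact (hT.2 w u h).1 hw.2 hw'.2
  have h3 := Finset.sum_le_sum h2
  have h4 := Finset.sum_lt_sum_of_nonempty hS hcon
  rw [← Finset.mul_sum] at h4
  rw [Finset.sum_add_distrib, ← h1] at h3
  omega

open Classical in
theorem card_le_ADT [Fintype V] (E : V → V → Prop) (F : Finset (V × V × V))
    (hF : IsADTFamily E F) : F.card ≤ ADT E := by
  apply le_csSup
  · refine ⟨Fintype.card (V × V × V), ?_⟩
    rintro n ⟨G, _, rfl⟩
    exact Finset.card_le_univ G
  · exact ⟨F, hF, rfl⟩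

open Classical in
theorem indegOn_le_four_mul [Fintype V] (E : V → V → Prop) (hT : IsTournament E) (X : Set V)
    (v : V) (hmin : ∀ u ∈ X, indegOn E X v ≤ indegOn E X u) :
    indegOn E X v ≤ 4 * ADT E := by
  have hcard : ∀ u, indegOn E X u = (Finset.univ.filter fun w => w ∈ X ∧ E w u).card := by
    intro u
    unfold indegOn
    rw [← Set.ncard_coe_finset]
    congr 1
    ext w
    simp
  obtain ⟨F, hF, hmax⟩ := Finset.exists_max_image
    (Finset.univ.filter fun F : Finset (V × V × V) => IsADTFamily E F ∧ ∀ t ∈ F, t.1 = v)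
    Finset.card ⟨∅, by simp [IsADTFamily]⟩
  simp only [Finset.mem_filter, Finset.mem_univ, true_and] at hF hmax
  obtain ⟨hF, hFv⟩ := hF
  have hle := card_le_ADT E F hF
  set W := F.image fun t => t.2.1 with hW
  set U := F.image fun t => t.2.2 with hU
  have hWc : W.card ≤ F.card := Finset.card_image_le
  have hUc : U.card ≤ F.card := Finset.card_image_le
  set N := Finset.univ.filter fun w => w ∈ X ∧ E w v with hN
  have hNv := hcard v
  rw [← hN] at hNv
  rcases (N \ U).eq_empty_or_nonempty with he | hne
  · have := Finset.card_le_card (Finset.sdiff_eq_empty_iff_subset.1 he)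
    omega
  obtain ⟨u, hu, hu2⟩ := exists_small_indeg E hT _ hne
  have huN : u ∈ X ∧ E u v := by
    have := (Finset.mem_sdiff.1 hu).1
    simpa [hN] using this
  have huU := (Finset.mem_sdiff.1 hu).2
  have huv : u ≠ v := by
    rintro rfl
    exact hT.1 _ huN.2
  have hsub : (Finset.univ.filter fun w => w ∈ X ∧ E w u) ⊆
      ((N \ U).filter fun w => E w u) ∪ (U ∪ W) := by
    intro w hw
    simp only [Finset.mem_filter, Finset.mem_univ, true_and] at hw
    by_contra hnot
    simp only [Finset.mem_union, Finset.mem_filter, Finset.mem_sdiff, not_or] at hnot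
    obtain ⟨hn1, hn2, hn3⟩ := hnot
    have hwv : w ≠ v := by
      rintro rfl
      exact (hT.2 _ _ huv).1 huN.2 hw.2
    have hnwv : ¬ E w v := by
      intro h
      apply hn1
      refine ⟨⟨?_, hn2⟩, hw.2⟩
      simp [hN, hw.1, h]
    have hvw : E v w := (hT.2 v w hwv.symm).2 hnwv
    have hdis : ∀ t ∈ F, Disjoint (triArcs (v, w, u)) (triArcs t) := by
      rintro ⟨a, b, c⟩ ht
      have ha : a = v := hFv _ ht
      subst ha
      obtain ⟨t1, t2, t3⟩ := hF.1 _ ht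
      simp only at t1 t2 t3
      have hba : b ≠ a := by
        rintro rfl
        exact hT.1 _ t1
      have hca : c ≠ a := by
        rintro rfl
        exact hT.1 _ t3
      have hbw : b ≠ w := by
        rintro rfl
        exact hn3 (Finset.mem_image.2 ⟨_, ht, rfl⟩)
      have hcu : c ≠ u := by
        rintro rfl
        exact huU (Finset.mem_image.2 ⟨_, ht, rfl⟩)
      rw [Set.disjoint_left]
      rintro ⟨x, y⟩ hx hy
      simp only [triArcs, Set.mem_insert_iff, Set.mem_singleton_iff, Prod.mk.injEq] at hx hy
      grind
    have hnF : (v, w, u) ∉ F := fun h => hn3 (Finset.mem_image.2 ⟨_, h, rfl⟩)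
    have := hmax (insert (v, w, u) F) ⟨⟨?_, ?_⟩, ?_⟩
    · rw [Finset.card_insert_of_notMem hnF] at this
      omega
    · intro t ht
      rcases Finset.mem_insert.1 ht with rfl | ht
      · exact ⟨hvw, hw.2, huN.2⟩
      · exact hF.1 t ht
    · intro t ht s hs hts
      rcases Finset.mem_insert.1 ht with rfl | ht <;> rcases Finset.mem_insert.1 hs with rfl | hs
      · exact absurd rfl hts
      · exact hdis s hs
      · exact (hdis t ht).symm
      · exact hF.2 t ht s hs hts
    · intro t ht
      rcases Finset.mem_insert.1 ht with rfl | ht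
      · rfl
      · exact hFv t ht
  have h1 := Finset.card_le_card hsub
  have h2 := Finset.card_union_le ((N \ U).filter fun w => E w u) (U ∪ W)
  have h3 := Finset.card_union_le U W
  have h4 : (N \ U).card ≤ N.card := Finset.card_le_card Finset.sdiff_subset
  have h5 := hmin u huN.1
  rw [hcard u] at h5
  omega

/-- The minimum in-degree of the tournament with its prefix removed is at most
12(ADT(T) + 1). -/
theorem stmt9 [Fintype V] (E : V → V → Prop) (hT : IsTournament E) :
    minIndegOn E (prefSet E)ᶜ ≤ 12 * (ADT E + 1) := by
  rcases Set.eq_empty_or_nonempty {k : ℕ | ∃ v ∈ (prefSet E)ᶜ, indegOn E (prefSet E)ᶜ v = k} with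
    he | hne
  · unfold minIndegOn
    rw [he]
    simp
  · obtain ⟨v, hv, hvk⟩ := Nat.sInf_mem hne
    have h := indegOn_le_four_mul E hT (prefSet E)ᶜ v (by
      intro u hu
      rw [hvk]
      exact Nat.sInf_le ⟨u, hu, rfl⟩)
    unfold minIndegOn
    omega
end

section
/- Let T be a tournament, uv ∈ E(T), and let Back be the set of back arcs of T. Let T̄ be T with the arc uv reversed, and Back̄ the set of back arcs of T̄. Then every arc xy in the symmetric difference Back △ Back̄ satisfies one of: (1) x ∈ {u, v} and y ∈ Δdb_T(u,v), or (2) y ∈ {u, v} and x ∈ Δdb_T(u,v), where Δdb_T(u,v) is the union of the degree buckets DB_T[d_T(u)−1], DB_T[d_T(u)], DB_T[d_T(u)+1], DB_T[d_T(v)−1], DB_T[d_T(v)], DB_T[d_T(v)+1] (nonexistent buckets treated as empty). -/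
variable {V : Type*}

theorem indeg_rev_v [Fintype V] (E : V → V → Prop) (hT : IsTournament E) (u v : V)
    (huv : E u v) : indeg (reverseArc E u v) v + 1 = indeg E v := by
  have hne : u ≠ v := fun h => hT.1 v (h ▸ huv)
  have hvu : ¬ E v u := (hT.2 u v hne).1 huv
  have h : {a | reverseArc E u v a v} = {a | E a v} \ {u} := by
    ext a
    simp only [reverseArc, Set.mem_setOf_eq, Set.mem_diff, Set.mem_singleton_iff, Prod.mk.injEq]
    grind
  unfold indeg
  rw [h]
  exact Set.ncard_diff_singleton_add_one huv (Set.toFinite _)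

theorem indeg_rev_u [Fintype V] (E : V → V → Prop) (hT : IsTournament E) (u v : V)
    (huv : E u v) : indeg (reverseArc E u v) u = indeg E u + 1 := by
  have hne : u ≠ v := fun h => hT.1 v (h ▸ huv)
  have hvu : ¬ E v u := (hT.2 u v hne).1 huv
  have h : {a | reverseArc E u v a u} = insert v {a | E a u} := by
    ext a
    simp only [reverseArc, Set.mem_setOf_eq, Set.mem_insert_iff, Prod.mk.injEq]
    grind
  unfold indeg
  rw [h]
  exact Set.ncard_insert_of_notMem hvu (Set.toFinite _)

theorem indeg_rev_other [Fintype V] (E : V → V → Prop) (u v w : V)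
    (hu : w ≠ u) (hv : w ≠ v) : indeg (reverseArc E u v) w = indeg E w := by
  have h : {a | reverseArc E u v a w} = {a | E a w} := by
    ext a
    simp only [reverseArc, Set.mem_setOf_eq, Prod.mk.injEq]
    grind
  unfold indeg
  rw [h]

/-- Every arc in the symmetric difference of the back-arc sets before and after
reversing `uv` has one endpoint in `{u, v}` and the other in the affected buckets. -/
theorem stmt10 [Fintype V] (E : V → V → Prop) (hT : IsTournament E) (u v : V)
    (huv : E u v) :
    ∀ p ∈ symmDiff (backArcs E) (backArcs (reverseArc E u v)),
      (p.1 ∈ ({u, v} : Set V) ∧ p.2 ∈ affected E u v) ∨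
      (p.2 ∈ ({u, v} : Set V) ∧ p.1 ∈ affected E u v) := by
  rintro ⟨x, y⟩ hp
  have hne : u ≠ v := fun h => hT.1 v (h ▸ huv)
  have hvu : ¬ E v u := (hT.2 u v hne).1 huv
  have h1 := indeg_rev_v E hT u v huv
  have h2 := indeg_rev_u E hT u v huv
  have h3 := indeg_rev_other E u v
  have hx := hT.1 x
  have hr : reverseArc E u v x y ↔ (¬ ((x = u ∧ y = v) ∨ (x = v ∧ y = u)) ∧ E x y) ∨
      ((x = u ∧ y = v) ∧ E v u) ∨ ((x = v ∧ y = u) ∧ E u v) := by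
    simp only [reverseArc, Prod.mk.injEq]
  simp only [Set.mem_symmDiff, backArcs, Set.mem_setOf_eq, hr] at hp
  simp only [affected, Set.mem_setOf_eq, Set.mem_insert_iff, Set.mem_singleton_iff]
  have h3x := h3 x
  have h3y := h3 y
  clear h3 hr hT
  by_cases a : x = u <;> by_cases b : x = v <;> by_cases c : y = u <;> by_cases d : y = v <;>
    grind
end

section
/- Let T be a tournament and Back the set of all back arcs of T. Then |Back| ≤ 288(ADT(T) + 1)(√(6·ADT(T) + 7) + 1). -/
variable {V : Type*}

section helpers
open Classical Finset

/-- Chudnovsky–Seymour–Sullivan: a digraph without directed triangles has an ordering whose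
number of backward arcs is at most the number of non-adjacent pairs. -/
theorem css_order (G : V → V → Prop) (hasym : ∀ x y, G x y → ¬ G y x)
    (htri : ∀ x y z, G x y → G y z → ¬ G z x) :
    ∀ (n : ℕ) (S : Finset V), S.card = n → ∃ π : V → ℕ, Set.InjOn π S ∧ (∀ x ∈ S, π x < S.card) ∧
      2 * ((S ×ˢ S).filter (fun p => G p.1 p.2 ∧ π p.2 < π p.1)).card ≤
        ((S ×ˢ S).filter (fun p => p.1 ≠ p.2 ∧ ¬ G p.1 p.2 ∧ ¬ G p.2 p.1)).card := by
  intro n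
  induction n using Nat.strong_induction_on with
  | _ n ih =>
  intro S hS
  rcases S.eq_empty_or_nonempty with rfl | hne
  · exact ⟨fun _ => 0, by simp, by simp, by simp⟩
  have hirr : ∀ x, ¬ G x x := fun x h => hasym x x h h
  let t : V → V → V → ℕ := fun x y z =>
    if G x y ∧ G y z ∧ x ≠ z ∧ ¬ G x z ∧ ¬ G z x then 1 else 0
  obtain ⟨v, hv, hle⟩ : ∃ v ∈ S, (∑ a ∈ S, ∑ c ∈ S, t v a c) ≤ ∑ b ∈ S, ∑ a ∈ S, t b v a := by
    apply Finset.exists_le_of_sum_le hne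
    rw [Finset.sum_comm]
  have hf : (∑ a ∈ S, ∑ c ∈ S, t v a c) = ((S ×ˢ S).filter (fun p =>
      G v p.1 ∧ G p.1 p.2 ∧ v ≠ p.2 ∧ ¬ G v p.2 ∧ ¬ G p.2 v)).card := by
    rw [Finset.card_filter, Finset.sum_product]
  have hg : (∑ b ∈ S, ∑ a ∈ S, t b v a) = ((S ×ˢ S).filter (fun p =>
      G p.1 v ∧ G v p.2 ∧ p.1 ≠ p.2 ∧ ¬ G p.1 p.2 ∧ ¬ G p.2 p.1)).card := by
    rw [Finset.card_filter, Finset.sum_product]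
  rw [hf, hg] at hle
  set A := S.filter (fun x => G v x) with hA
  set L := S.filter (fun x => x ≠ v ∧ ¬ G v x) with hL
  have hAS : A ⊆ S := filter_subset _ _
  have hLS : L ⊆ S := filter_subset _ _
  have hdisj : Disjoint L A := by
    rw [Finset.disjoint_left]; intro x; simp only [hA, hL, mem_filter]; tauto
  have hcard : S.card = L.card + 1 + A.card := by
    have : S = insert v (L ∪ A) := by
      ext x
      simp only [hA, hL, mem_insert, mem_union, mem_filter]
      by_cases hx : x = v
      · subst hx; simp [hv]
      · tauto
    conv_lhs => rw [this]
    rw [card_insert_of_notMem, card_union_of_disjoint hdisj]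
    · omega
    · simp [hA, hL, hirr]
  obtain ⟨π₁, hi₁, hb₁, hc₁⟩ := ih L.card (by omega) L rfl
  obtain ⟨π₂, hi₂, hb₂, hc₂⟩ := ih A.card (by omega) A rfl
  let π : V → ℕ := fun x => if x = v then L.card else if G v x then L.card + 1 + π₂ x else π₁ x
  have hπv : π v = L.card := by simp [π]
  have hπA : ∀ x ∈ A, π x = L.card + 1 + π₂ x := by
    intro x hx
    have h1 := (mem_filter.1 hx).2
    have h2 : x ≠ v := by rintro rfl; exact hirr _ h1
    simp [π, h1, h2]
  have hπL : ∀ x ∈ L, π x = π₁ x := by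
    intro x hx
    have h1 := (mem_filter.1 hx).2
    simp [π, h1.1, h1.2]
  have hcases : ∀ x ∈ S, x = v ∨ x ∈ A ∨ x ∈ L := by
    intro x hx
    simp only [hA, hL, mem_filter]; tauto
  refine ⟨π, ?_, ?_, ?_⟩
  · intro x hx y hy hxy
    rcases hcases x hx with rfl | h1 | h1 <;> rcases hcases y hy with h2 | h2 | h2
    · exact h2.symm
    · rw [hπv, hπA y h2] at hxy; omega
    · rw [hπv, hπL y h2] at hxy; have := hb₁ y h2; omega
    · subst h2; rw [hπv, hπA x h1] at hxy; omega
    · rw [hπA x h1, hπA y h2] at hxy; exact hi₂ h1 h2 (by omega)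
    · rw [hπA x h1, hπL y h2] at hxy; have := hb₁ y h2; omega
    · subst h2; rw [hπv, hπL x h1] at hxy; have := hb₁ x h1; omega
    · rw [hπL x h1, hπA y h2] at hxy; have := hb₁ x h1; omega
    · rw [hπL x h1, hπL y h2] at hxy; exact hi₁ h1 h2 hxy
  · intro x hx
    rcases hcases x hx with rfl | h1 | h1
    · rw [hπv]; omega
    · rw [hπA x h1]; have := hb₂ x h1; omega
    · rw [hπL x h1]; have := hb₁ x h1; omega
  set P := (S ×ˢ S).filter (fun p =>
      G p.1 v ∧ G v p.2 ∧ p.1 ≠ p.2 ∧ ¬ G p.1 p.2 ∧ ¬ G p.2 p.1) with hP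
  set Q := (S ×ˢ S).filter (fun p =>
      G v p.1 ∧ G p.1 p.2 ∧ v ≠ p.2 ∧ ¬ G v p.2 ∧ ¬ G p.2 v) with hQ
  set BL := (L ×ˢ L).filter (fun p => G p.1 p.2 ∧ π₁ p.2 < π₁ p.1) with hBL
  set BA := (A ×ˢ A).filter (fun p => G p.1 p.2 ∧ π₂ p.2 < π₂ p.1) with hBA
  set NL := (L ×ˢ L).filter (fun p => p.1 ≠ p.2 ∧ ¬ G p.1 p.2 ∧ ¬ G p.2 p.1) with hNL
  set NA := (A ×ˢ A).filter (fun p => p.1 ≠ p.2 ∧ ¬ G p.1 p.2 ∧ ¬ G p.2 p.1) with hNA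
  have hback : ((S ×ˢ S).filter (fun p => G p.1 p.2 ∧ π p.2 < π p.1)) ⊆ BL ∪ BA ∪ Q := by
    rintro ⟨x, y⟩ hp
    simp only [mem_filter, mem_product] at hp
    obtain ⟨⟨hx, hy⟩, hG, hlt⟩ := hp
    rcases hcases x hx with h1 | h1 | h1 <;> rcases hcases y hy with h2 | h2 | h2
    · subst h1; subst h2; exact absurd hG (hirr _)
    · subst h1; rw [hπv, hπA y h2] at hlt; omega
    · subst h1; exact absurd hG (mem_filter.1 h2).2.2
    · subst h2; exact absurd hG (hasym _ _ (mem_filter.1 h1).2)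
    · rw [hπA x h1, hπA y h2] at hlt
      simp only [mem_union]; left; right
      simp only [hBA, mem_filter, mem_product]
      exact ⟨⟨h1, h2⟩, hG, by omega⟩
    · simp only [mem_union]; right
      simp only [hQ, mem_filter, mem_product]
      have a1 := (mem_filter.1 h1).2
      have a2 := (mem_filter.1 h2).2
      exact ⟨⟨hx, hy⟩, a1, hG, a2.1.symm, a2.2, htri _ _ _ a1 hG⟩
    · subst h2; rw [hπv, hπL x h1] at hlt; have := hb₁ x h1; omega
    · rw [hπL x h1, hπA y h2] at hlt; have := hb₁ x h1; omega
    · rw [hπL x h1, hπL y h2] at hlt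
      simp only [mem_union]; left; left
      simp only [hBL, mem_filter, mem_product]
      exact ⟨⟨h1, h2⟩, hG, hlt⟩
  have hb := (card_le_card hback).trans ((card_union_le _ _).trans
    (Nat.add_le_add_right (card_union_le _ _) _))
  set P' := P.map (Equiv.prodComm V V).toEmbedding with hP'
  have hP'c : P'.card = P.card := card_map _
  have hP'm : ∀ x y, (x, y) ∈ P' ↔ (y, x) ∈ P := by
    intro x y
    simp [hP', mem_map_equiv]
  have hPv : ∀ x y, (x, y) ∈ P → x ∈ L ∧ y ∈ A := by
    intro x y h
    simp only [hP, mem_filter, mem_product] at h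
    simp only [hA, hL, mem_filter]
    refine ⟨⟨h.1.1, ?_, hasym _ _ h.2.1⟩, h.1.2, h.2.2.1⟩
    rintro rfl
    exact hirr _ h.2.1
  have hnon : NL ∪ NA ∪ P ∪ P' ⊆
      (S ×ˢ S).filter (fun p => p.1 ≠ p.2 ∧ ¬ G p.1 p.2 ∧ ¬ G p.2 p.1) := by
    rintro ⟨x, y⟩ h
    simp only [mem_union, hP'm] at h
    simp only [mem_filter, mem_product]
    rcases h with ((h | h) | h) | h
    · simp only [hNL, mem_filter, mem_product] at h
      exact ⟨⟨hLS h.1.1, hLS h.1.2⟩, h.2⟩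
    · simp only [hNA, mem_filter, mem_product] at h
      exact ⟨⟨hAS h.1.1, hAS h.1.2⟩, h.2⟩
    · simp only [hP, mem_filter, mem_product] at h
      exact ⟨h.1, h.2.2.2⟩
    · simp only [hP, mem_filter, mem_product] at h
      exact ⟨h.1.symm, h.2.2.2.1.symm, h.2.2.2.2.2, h.2.2.2.2.1⟩
  have hAL : ∀ x, x ∈ L → x ∉ A := fun x h => Finset.disjoint_left.1 hdisj h
  have d1 : Disjoint NL NA := by
    rw [Finset.disjoint_left]; rintro ⟨x, y⟩ h h'
    simp only [hNL, hNA, mem_filter, mem_product] at h h'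
    exact hAL x h.1.1 h'.1.1
  have d2 : Disjoint (NL ∪ NA) P := by
    rw [Finset.disjoint_left]; rintro ⟨x, y⟩ h h'
    have q := hPv _ _ h'
    simp only [hNL, hNA, mem_union, mem_filter, mem_product] at h
    rcases h with h | h
    · exact hAL y h.1.2 q.2
    · exact hAL x q.1 h.1.1
  have d3 : Disjoint (NL ∪ NA ∪ P) P' := by
    rw [Finset.disjoint_left]; rintro ⟨x, y⟩ h h'
    rw [hP'm] at h'
    have q := hPv _ _ h'
    rw [mem_union] at h
    rcases h with h | h
    · simp only [hNL, hNA, mem_union, mem_filter, mem_product] at h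
      rcases h with h | h
      · exact hAL x h.1.1 q.2
      · exact hAL y q.1 h.1.2
    · exact hAL x (hPv _ _ h).1 q.2
  have hn := card_le_card hnon
  rw [card_union_of_disjoint d3, card_union_of_disjoint d2, card_union_of_disjoint d1] at hn
  omega

/-- An ordering with `m` backward arcs bounds the number of in-degree back arcs by `5m`. -/
theorem back_le_order [Fintype V] (E : V → V → Prop) (hT : IsTournament E) (π : V → ℕ)
    (hinj : Function.Injective π) (hlt : ∀ x, π x < Fintype.card V) :
    Set.ncard (backArcs E) ≤
      5 * ((univ : Finset (V × V)).filter (fun p => E p.1 p.2 ∧ π p.2 < π p.1)).card := by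
  set M := (univ : Finset (V × V)).filter (fun p => E p.1 p.2 ∧ π p.2 < π p.1) with hM
  let fin : V → ℕ := fun v => (univ.filter (fun x => E x v ∧ π v < π x)).card
  let fout : V → ℕ := fun v => (univ.filter (fun y => E v y ∧ π y < π v)).card
  have hsin : ∑ v, fin v = M.card := by
    rw [hM, card_filter, Fintype.sum_prod_type_right]
    exact sum_congr rfl fun v _ => by rw [← card_filter]
  have hsout : ∑ v, fout v = M.card := by
    rw [hM, card_filter, Fintype.sum_prod_type]
    exact sum_congr rfl fun v _ => by rw [← card_filter]
  have hind : ∀ v, indeg E v = (univ.filter (fun u => E u v)).card := by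
    intro v
    rw [indeg, Set.ncard_eq_toFinset_card']
    congr 1; ext; simp
  have hpos : ∀ v, (univ.filter (fun u => π u < π v)).card = π v := by
    intro v
    have himg : univ.image π = range (Fintype.card V) := by
      apply eq_of_subset_of_card_le
      · intro x hx
        obtain ⟨y, -, rfl⟩ := mem_image.1 hx
        exact mem_range.2 (hlt y)
      · rw [card_image_of_injective _ hinj]; simp
    have : (univ.filter (fun u => π u < π v)).image π = range (π v) := by
      ext i
      simp only [mem_image, mem_filter, mem_univ, true_and, mem_range]
      constructor
      · rintro ⟨a, h, rfl⟩; exact h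
      · intro hi
        have : i ∈ univ.image π := by
          rw [himg, mem_range]; exact hi.trans (hlt v)
        obtain ⟨y, -, rfl⟩ := mem_image.1 this
        exact ⟨y, hi, rfl⟩
    rw [← card_image_of_injective _ hinj, this, card_range]
  have h1 : ∀ v, indeg E v ≤ π v + fin v := by
    intro v
    rw [hind, ← hpos v]
    refine le_trans (card_le_card ?_) (card_union_le _ _)
    intro x hx
    simp only [mem_filter, mem_univ, true_and, mem_union] at hx ⊢
    rcases lt_trichotomy (π x) (π v) with h | h | h
    · exact Or.inl (by simpa [hpos] using h)
    · have := hinj h; subst this; exact absurd hx (hT.1 _)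
    · exact Or.inr ⟨hx, by simpa [hpos] using h⟩
  have h2 : ∀ v, π v ≤ indeg E v + fout v := by
    intro v
    rw [hind]
    conv_lhs => rw [← hpos v]
    refine le_trans (card_le_card ?_) (card_union_le _ _)
    intro x hx
    simp only [mem_filter, mem_univ, true_and, mem_union] at hx ⊢
    by_cases h : E x v
    · exact Or.inl h
    · refine Or.inr ⟨?_, hx⟩
      have hne : v ≠ x := by rintro rfl; exact lt_irrefl _ hx
      exact (hT.2 v x hne).2 h
  let W₁ := (univ : Finset (V × V)).filter (fun p => π p.1 < π p.2 ∧ π p.2 ≤ π p.1 + 2 * fin p.1)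
  let W₂ := (univ : Finset (V × V)).filter (fun p => π p.1 < π p.2 ∧ π p.2 ≤ π p.1 + 2 * fout p.2)
  have hsub : backArcs E ⊆ ((M ∪ W₁ ∪ W₂ : Finset (V × V)) : Set (V × V)) := by
    rintro ⟨u, v⟩ ⟨hE, hd⟩
    simp only [coe_union, Set.mem_union, mem_coe, hM, W₁, W₂, mem_filter, mem_univ, true_and]
    simp only at hE hd
    rcases lt_trichotomy (π v) (π u) with h | h | h
    · exact Or.inl (Or.inl ⟨hE, h⟩)
    · have := hinj h; subst this; exact absurd hE (hT.1 _)
    · have a := h1 u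
      have b := h2 v
      by_cases hc : π v ≤ π u + 2 * fin u
      · exact Or.inl (Or.inr ⟨h, hc⟩)
      · exact Or.inr ⟨h, by omega⟩
  have hW₁ : W₁.card ≤ 2 * M.card := by
    rw [← hsin, mul_sum]
    simp only [W₁]
    rw [card_filter, Fintype.sum_prod_type]
    refine sum_le_sum fun u _ => ?_
    rw [← card_filter, ← card_image_of_injective _ hinj]
    have : (Ioc (π u) (π u + 2 * fin u)).card = 2 * fin u := by simp
    rw [← this]
    apply card_le_card
    intro i hi
    obtain ⟨y, hy, rfl⟩ := mem_image.1 hi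
    simpa using hy
  have hW₂ : W₂.card ≤ 2 * M.card := by
    rw [← hsout, mul_sum]
    simp only [W₂]
    rw [card_filter, Fintype.sum_prod_type_right]
    refine sum_le_sum fun u _ => ?_
    rw [← card_filter, ← card_image_of_injective _ hinj]
    have : (Ico (π u - 2 * fout u) (π u)).card ≤ 2 * fout u := by
      rw [Nat.card_Ico]; omega
    refine le_trans (card_le_card ?_) this
    intro i hi
    obtain ⟨y, hy, rfl⟩ := mem_image.1 hi
    simp only [mem_filter, mem_univ, true_and] at hy
    rw [mem_Ico]; omega
  have := Set.ncard_le_ncard hsub (Finset.finite_toSet _)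
  rw [Set.ncard_coe_finset] at this
  have h3 := card_union_le (M ∪ W₁) W₂
  have h4 := card_union_le M W₁
  omega

theorem exists_max_family [Fintype V] (E : V → V → Prop) :
    (∃ F : Finset (V × V × V), IsADTFamily E F ∧ F.card = ADT E) ∧
    ∀ F : Finset (V × V × V), IsADTFamily E F → F.card ≤ ADT E := by
  have hb : BddAbove {n : ℕ | ∃ F : Finset (V × V × V), IsADTFamily E F ∧ F.card = n} := by
    refine ⟨Fintype.card (V × V × V), ?_⟩
    rintro n ⟨F, -, rfl⟩
    exact card_le_univ F
  refine ⟨?_, fun F hF => le_csSup hb ⟨F, hF, rfl⟩⟩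
  exact Nat.sSup_mem (s := {n : ℕ | ∃ F : Finset (V × V × V), IsADTFamily E F ∧ F.card = n})
    ⟨0, ∅, ⟨by simp, by simp⟩, rfl⟩ hb

theorem back_le_linear [Fintype V] (E : V → V → Prop) (hT : IsTournament E) :
    Set.ncard (backArcs E) ≤ 30 * ADT E := by
  obtain ⟨⟨F, hF, hFc⟩, hmax⟩ := exists_max_family E
  let R : Finset (V × V) := F.biUnion (fun t => {(t.1, t.2.1), (t.2.1, t.2.2), (t.2.2, t.1)})
  have hRc : R.card ≤ 3 * ADT E := by
    rw [← hFc, mul_comm]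
    exact card_biUnion_le_card_mul _ _ _ fun t _ => card_le_three
  have hRm : ∀ p, p ∈ R ↔ ∃ t ∈ F, p ∈ triArcs t := by
    intro p; simp [R, triArcs]
  let G : V → V → Prop := fun x y => E x y ∧ (x, y) ∉ R
  have hEas : ∀ x y, E x y → ¬ E y x := by
    intro x y h
    by_cases hxy : x = y
    · subst hxy; exact hT.1 _
    · exact (hT.2 x y hxy).1 h
  have htri : ∀ x y z, G x y → G y z → ¬ G z x := by
    intro x y z h1 h2 h3
    have hnd : ∀ s ∈ F, Disjoint (triArcs (x, y, z)) (triArcs s) := by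
      intro s hs
      rw [Set.disjoint_left]
      intro p hp hps
      have hpR : p ∈ R := (hRm p).2 ⟨s, hs, hps⟩
      simp only [triArcs, Set.mem_insert_iff, Set.mem_singleton_iff] at hp
      rcases hp with rfl | rfl | rfl
      · exact h1.2 hpR
      · exact h2.2 hpR
      · exact h3.2 hpR
    have hnot : (x, y, z) ∉ F := by
      intro h
      exact h1.2 ((hRm _).2 ⟨_, h, by simp [triArcs]⟩)
    have hfam : IsADTFamily E (insert (x, y, z) F) := by
      refine ⟨?_, ?_⟩
      · intro t ht
        rcases mem_insert.1 ht with rfl | ht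
        · exact ⟨h1.1, h2.1, h3.1⟩
        · exact hF.1 t ht
      · intro t ht s hs hts
        rcases mem_insert.1 ht with rfl | ht <;> rcases mem_insert.1 hs with rfl | hs
        · exact absurd rfl hts
        · exact hnd s hs
        · exact (hnd t ht).symm
        · exact hF.2 t ht s hs hts
    have := hmax _ hfam
    rw [card_insert_of_notMem hnot] at this
    omega
  obtain ⟨π, hinj, hlt, hc⟩ := css_order G (fun x y h h' => hEas x y h.1 h'.1) htri _ univ rfl
  have hinj' : Function.Injective π := by
    intro x y h; exact hinj (by simp) (by simp) h
  have hmain := back_le_order E hT π hinj' (fun x => hlt x (mem_univ x))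
  have hN : ((univ ×ˢ univ : Finset (V × V)).filter
      (fun p => p.1 ≠ p.2 ∧ ¬ G p.1 p.2 ∧ ¬ G p.2 p.1)).card ≤ 2 * R.card := by
    have hsub : ((univ ×ˢ univ : Finset (V × V)).filter
      (fun p => p.1 ≠ p.2 ∧ ¬ G p.1 p.2 ∧ ¬ G p.2 p.1)) ⊆
        R ∪ R.map (Equiv.prodComm V V).toEmbedding := by
      rintro ⟨x, y⟩ h
      simp only [mem_filter, G] at h
      obtain ⟨-, hne, ha, hb⟩ := h
      have hm : (x, y) ∈ R.map (Equiv.prodComm V V).toEmbedding ↔ (y, x) ∈ R := by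
        simp [mem_map_equiv]
      rw [mem_union, hm]
      have := hT.2 x y hne
      tauto
    have := (card_le_card hsub).trans (card_union_le _ _)
    rw [card_map] at this
    omega
  have hM : ((univ : Finset (V × V)).filter (fun p => E p.1 p.2 ∧ π p.2 < π p.1)).card ≤
      ((univ ×ˢ univ : Finset (V × V)).filter (fun p => G p.1 p.2 ∧ π p.2 < π p.1)).card
        + R.card := by
    refine le_trans (card_le_card ?_) (card_union_le _ _)
    rintro ⟨x, y⟩ h
    simp only [mem_filter, mem_univ, true_and, mem_union, mem_product, G] at h ⊢
    tauto
  have hc' : 2 * ((univ ×ˢ univ : Finset (V × V)).filter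
      (fun p => G p.1 p.2 ∧ π p.2 < π p.1)).card ≤ ((univ ×ˢ univ : Finset (V × V)).filter
      (fun p => p.1 ≠ p.2 ∧ ¬ G p.1 p.2 ∧ ¬ G p.2 p.1)).card := by
    convert hc
  omega

end helpers

/-- |Back| ≤ 288(ADT(T) + 1)(√(6·ADT(T) + 7) + 1). -/
theorem stmt12 [Fintype V] (E : V → V → Prop) (hT : IsTournament E) :
    (Set.ncard (backArcs E) : ℝ) ≤
      288 * ((ADT E : ℝ) + 1) * (Real.sqrt (6 * (ADT E : ℝ) + 7) + 1) := by
  have h : (Set.ncard (backArcs E) : ℝ) ≤ 30 * (ADT E : ℝ) := by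
    exact_mod_cast back_le_linear E hT
  have h0 : (0 : ℝ) ≤ (ADT E : ℝ) := Nat.cast_nonneg _
  have hs := Real.sqrt_nonneg (6 * (ADT E : ℝ) + 7)
  nlinarith [mul_nonneg h0 hs]
end

section
/- For every tournament T, the maximum size of a degree bucket satisfies maxdb(T) ≤ 2·FVST(T) + 1, where FVST(T) is the minimum size of a feedback vertex set of T. -/
variable {V : Type*}

open Classical in
theorem bucket_le [Fintype V] (E : V → V → Prop) (hT : IsTournament E) (F : Finset V)
    (hF : IsFVS E F) (d : ℕ) : Set.ncard {v : V | indeg E v = d} ≤ 2 * F.card + 1 := by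
  let P : V → Finset V := fun v => Finset.univ.filter fun u => u ∉ F ∧ E u v
  have hlt : ∀ u v, u ∉ F → v ∉ F → E u v → (P u).card < (P v).card := by
    intro u v hu hv huv
    apply Finset.card_lt_card
    rw [Finset.ssubset_iff_of_subset]
    · refine ⟨u, ?_, ?_⟩
      · simp [P, hu, huv]
      · simp [P, hT.1 u]
    · intro w hw
      simp only [P, Finset.mem_filter, Finset.mem_univ, true_and] at hw ⊢
      obtain ⟨hwF, hwu⟩ := hw
      refine ⟨hwF, ?_⟩
      by_contra hwv
      by_cases hne : v = w
      · subst hne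
        have hvu : u ≠ v := fun h => hT.1 u (by rw [← h] at huv; exact huv)
        exact (hT.2 u v hvu).1 huv hwu
      · have hvw : E v w := (hT.2 v w hne).2 hwv
        exact hF v (((Relation.TransGen.single ⟨hvw, hv, hwF⟩).tail ⟨hwu, hwF, hu⟩).tail
          ⟨huv, hu, hv⟩)
  have hdeg : ∀ v, (P v).card ≤ indeg E v ∧ indeg E v ≤ (P v).card + F.card := by
    intro v
    have h1 : indeg E v = (Finset.univ.filter fun u => E u v).card := by
      rw [indeg, ← Set.ncard_coe_finset]
      congr 1
      ext u
      simp
    rw [h1]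
    constructor
    · apply Finset.card_le_card
      intro u hu
      simp only [P, Finset.mem_filter, Finset.mem_univ, true_and] at hu ⊢
      exact hu.2
    · refine le_trans (Finset.card_le_card (t := P v ∪ F) ?_) (Finset.card_union_le _ _)
      intro u hu
      simp only [P, Finset.mem_filter, Finset.mem_univ, true_and, Finset.mem_union] at hu ⊢
      tauto
  have hB : Set.ncard {v : V | indeg E v = d}
      = (Finset.univ.filter fun v => indeg E v = d).card := by
    rw [← Set.ncard_coe_finset]
    congr 1
    ext u
    simp
  rw [hB]
  set B := Finset.univ.filter fun v => indeg E v = d with hBdef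
  have h2 : (B \ F).card ≤ (Finset.Icc (d - F.card) d).card := by
    apply Finset.card_le_card_of_injOn (fun v => (P v).card)
    · intro v hv
      have hv' : indeg E v = d := by
        have : v ∈ B := (Finset.mem_sdiff.1 hv).1
        simpa [hBdef] using this
      have := hdeg v
      simp only [Finset.coe_Icc, Set.mem_Icc]
      omega
    · intro u hu v hv huv
      have hu' := (Finset.mem_sdiff.1 hu).2
      have hv' := (Finset.mem_sdiff.1 hv).2
      by_contra hne
      simp only at huv
      by_cases h : E u v
      · have := hlt u v hu' hv' h
        omega
      · have := hlt v u hv' hu' ((hT.2 v u (Ne.symm hne)).2 h)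
        omega
  rw [Nat.card_Icc] at h2
  have h3 : B.card ≤ (B \ F).card + F.card := by
    refine le_trans (Finset.card_le_card (t := (B \ F) ∪ F) ?_) (Finset.card_union_le _ _)
    intro u hu
    simp [hu]
  omega

/-- maxdb(T) ≤ 2·FVST(T) + 1. -/
theorem stmt14 [Fintype V] (E : V → V → Prop) (hT : IsTournament E) :
    maxdb E ≤ 2 * FVST E + 1 := by
  have hne : {n : ℕ | ∃ F : Finset V, IsFVS E F ∧ F.card = n}.Nonempty := by
    refine ⟨_, Finset.univ, ?_, rfl⟩
    intro v hv
    obtain ⟨c, hc, _⟩ := Relation.TransGen.head'_iff.1 hv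
    exact hc.2.1 (Finset.mem_univ _)
  obtain ⟨F, hF, hcard⟩ := Nat.sInf_mem hne
  have hc : F.card = FVST E := hcard
  rw [← hc]
  exact Finset.sup_le fun d _ => bucket_le E hT F hF d
end

section
/- Let T be a tournament on n vertices, k ∈ ℕ, let LBack be the set of all k-long back arcs of T (back arcs uv with |d_T(u) − d_T(v)| ≥ k), and let Empty = {d ∈ {0,…,n−1} : DB_T[d] = ∅}. Then |Empty| ≤ FVST(T) · (2k + |LBack| + 2·FVST(T) + 5). -/
variable {V : Type*}

open Classical in
theorem indeg_eq_card [Fintype V] (E : V → V → Prop) (v : V) :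
    indeg E v = (Finset.univ.filter fun u => E u v).card := by
  unfold indeg
  rw [Set.ncard_eq_toFinset_card']
  simp

theorem exists_min_fvs [Fintype V] (E : V → V → Prop) :
    ∃ F : Finset V, IsFVS E F ∧ F.card = FVST E := by
  have h : {n : ℕ | ∃ F : Finset V, IsFVS E F ∧ F.card = n}.Nonempty := by
    refine ⟨_, Finset.univ, ?_, rfl⟩
    intro v hv
    rcases Relation.TransGen.head'_iff.1 hv with ⟨c, hc, _⟩
    exact hc.2.1 (Finset.mem_univ _)
  exact Nat.sInf_mem h

open Classical in
/-- in-neighbours of a vertex inside the feedback vertex set -/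
noncomputable def gF (E : V → V → Prop) (F : Finset V) (v : V) : ℕ :=
  (F.filter fun u => E u v).card

open Classical in
/-- rank of a vertex in the acyclic part -/
noncomputable def rF [Fintype V] (E : V → V → Prop) (F : Finset V) (v : V) : ℕ :=
  (Finset.univ.filter fun u => u ∉ F ∧ E u v).card

open Classical in
theorem indeg_split [Fintype V] (E : V → V → Prop) (F : Finset V) (v : V) :
    indeg E v = rF E F v + gF E F v := by
  rw [indeg_eq_card, rF, gF, ← Finset.card_union_of_disjoint]
  · congr 1
    ext u
    simp only [Finset.mem_filter, Finset.mem_union, Finset.mem_univ, true_and]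
    tauto
  · rw [Finset.disjoint_left]
    intro u hu hu'
    simp only [Finset.mem_filter, Finset.mem_univ, true_and] at hu hu'
    exact hu.1 hu'.1

theorem rF_lt [Fintype V] (E : V → V → Prop) (hT : IsTournament E) (F : Finset V)
    (hF : IsFVS E F) (u v : V) (hu : u ∉ F) (hv : v ∉ F) (h : E u v) :
    rF E F u < rF E F v := by
  classical
  unfold rF
  apply Finset.card_lt_card
  rw [Finset.ssubset_iff_of_subset]
  · refine ⟨u, by simp [hu, h], by simp [hT.1 u]⟩
  · intro w hw
    simp only [Finset.mem_filter, Finset.mem_univ, true_and] at hw ⊢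
    refine ⟨hw.1, ?_⟩
    by_contra hwv
    have huw : Relation.TransGen (fun a b => E a b ∧ a ∉ F ∧ b ∉ F) w v :=
      (Relation.TransGen.single ⟨hw.2, hw.1, hu⟩).tail ⟨h, hu, hv⟩
    by_cases hwe : w = v
    · subst hwe
      exact hF _ huw
    · have : E v w := by
        have := hT.2 w v hwe
        tauto
      exact hF _ (huw.tail ⟨this, hv, hw.1⟩)

theorem exists_enum [Fintype V] [Nonempty V] (E : V → V → Prop) (hT : IsTournament E)
    (F : Finset V) (hF : IsFVS E F) :
    ∃ v : ℕ → V, ∀ i < Fintype.card V - F.card, v i ∉ F ∧ rF E F (v i) = i := by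
  classical
  have hcard : (Finset.univ \ F).card = Fintype.card V - F.card := by
    rw [Finset.card_univ_sdiff]
  have himg : (Finset.univ \ F).image (rF E F) = Finset.range (Fintype.card V - F.card) := by
    apply Finset.eq_of_subset_of_card_le
    · intro i hi
      obtain ⟨u, hu, rfl⟩ := Finset.mem_image.1 hi
      have hu' : u ∉ F := by simpa using hu
      rw [Finset.mem_range, ← hcard]
      unfold rF
      apply Finset.card_lt_card
      rw [Finset.ssubset_iff_of_subset]
      · exact ⟨u, hu, by simp [hT.1 u]⟩
      · intro w hw
        simp only [Finset.mem_filter, Finset.mem_univ, true_and] at hw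
        simp [hw.1]
    · rw [Finset.card_range, Finset.card_image_of_injOn, hcard]
      intro a ha b hb hab
      have ha' : a ∉ F := by simpa using ha
      have hb' : b ∉ F := by simpa using hb
      by_contra hne
      by_cases h : E a b
      · exact absurd hab (rF_lt E hT F hF a b ha' hb' h).ne
      · have h' : E b a := by
          have := hT.2 a b hne
          tauto
        exact absurd hab (rF_lt E hT F hF b a hb' ha' h').ne'
  have key : ∀ i, ∃ v, i < Fintype.card V - F.card → v ∉ F ∧ rF E F v = i := by
    intro i
    by_cases hi : i < Fintype.card V - F.card
    · rw [← Finset.mem_range, ← himg] at hi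
      obtain ⟨u, hu, h⟩ := Finset.mem_image.1 hi
      exact ⟨u, fun _ => ⟨by simpa using hu, h⟩⟩
    · exact ⟨Classical.arbitrary V, fun h => absurd h hi⟩
  choose v hv using key
  exact ⟨v, hv⟩

theorem exists_jump (D : ℕ → ℕ) (d m : ℕ) (h0 : D 0 < d) (hm : d < D m) :
    ∃ i < m, D i < d ∧ d ≤ D (i + 1) := by
  induction m with
  | zero => omega
  | succ m ih =>
    by_cases h : d < D m
    · obtain ⟨i, hi, h⟩ := ih h
      exact ⟨i, by omega, h⟩
    · by_cases h' : D m < d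
      · exact ⟨m, by omega, h', hm.le⟩
      · cases m with
        | zero => omega
        | succ m =>
          by_cases h2 : D m < d
          · exact ⟨m, by omega, h2, by omega⟩
          · -- use a minimal index
            have hex : ∃ j, d ≤ D j := ⟨m, by omega⟩
            have hj := Nat.find_spec hex
            have hle : Nat.find hex ≤ m := Nat.find_min' hex (by omega)
            have hpos : Nat.find hex ≠ 0 := by
              intro h
              rw [h] at hj
              omega
            obtain ⟨j, hjj⟩ := Nat.exists_eq_succ_of_ne_zero hpos
            have hlt := Nat.find_min hex (m := j) (by omega)
            rw [hjj] at hj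
            exact ⟨j, by omega, by omega, hj⟩

open Classical in
theorem trans_bound [Fintype V] (E : V → V → Prop) (hT : IsTournament E) (k m : ℕ)
    (F : Finset V) (v : ℕ → V) (hv : ∀ i < m, v i ∉ F ∧ rF E F (v i) = i)
    (x : V) (hx : x ∈ F) :
    ((Finset.range (m - 1)).filter fun i => E x (v (i + 1)) ∧ ¬ E x (v i)).card ≤
      (2 * k + F.card) + Set.ncard {p : V × V | p ∈ backArcs E ∧ kLong E k p} := by
  set L := {p : V × V | p ∈ backArcs E ∧ kLong E k p} with hL
  set A := (Finset.range (m - 1)).filter fun i => E x (v (i + 1)) ∧ ¬ E x (v i) with hA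
  have hinj : ∀ i < m, ∀ j < m, v i = v j → i = j := by
    intro i hi j hj h
    rw [← (hv i hi).2, ← (hv j hj).2, h]
  have hdeg : ∀ i < m, i ≤ indeg E (v i) ∧ indeg E (v i) ≤ i + F.card := by
    intro i hi
    have h1 := indeg_split E F (v i)
    have h2 : gF E F (v i) ≤ F.card := Finset.card_filter_le _ _
    have h3 := (hv i hi).2
    omega
  have hsplit := Finset.card_filter_add_card_filter_not (s := A)
    (fun i => indeg E (v (i + 1)) + k ≤ indeg E x ∨ indeg E x + k ≤ indeg E (v i))
  have h1 : (A.filter fun i => ¬ (indeg E (v (i + 1)) + k ≤ indeg E x ∨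
      indeg E x + k ≤ indeg E (v i))).card ≤ 2 * k + F.card := by
    have hsub : (A.filter fun i => ¬ (indeg E (v (i + 1)) + k ≤ indeg E x ∨
      indeg E x + k ≤ indeg E (v i))) ⊆
        Finset.Ico (indeg E x - k - F.card) (indeg E x + k) := by
      intro i hi
      simp only [hA, Finset.mem_filter, Finset.mem_range, Finset.mem_Ico] at hi ⊢
      have a1 := hdeg i (by omega)
      have a2 := hdeg (i + 1) (by omega)
      omega
    refine (Finset.card_le_card hsub).trans ?_
    rw [Nat.card_Ico]
    omega
  have h2 : (A.filter fun i => (indeg E (v (i + 1)) + k ≤ indeg E x ∨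
      indeg E x + k ≤ indeg E (v i))).card ≤ Set.ncard L := by
    rw [Set.ncard_eq_toFinset_card']
    apply Finset.card_le_card_of_injOn
      (fun i => if indeg E (v (i + 1)) + k ≤ indeg E x then (x, v (i + 1)) else (v i, x))
    · intro i hi
      simp only [hA, Finset.coe_filter, Finset.mem_filter, Finset.mem_range,
        Set.mem_ofPred_eq] at hi
      obtain ⟨⟨him, hi1, hi2⟩, hi3⟩ := hi
      simp only [Set.coe_toFinset, hL, Set.mem_ofPred_eq, backArcs, kLong]
      split_ifs with hc
      · refine ⟨⟨hi1, by simp only; omega⟩, ?_⟩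
        refine le_trans ?_ (le_abs_self _)
        simp only
        omega
      · have hc' := hi3.resolve_left hc
        have hne : x ≠ v i := fun h => (hv i (by omega)).1 (h ▸ hx)
        have hE : E (v i) x := by
          have := hT.2 x (v i) hne
          tauto
        refine ⟨⟨hE, by simp only; omega⟩, ?_⟩
        refine le_trans ?_ (le_abs_self _)
        simp only
        omega
    · intro i hi j hj hij
      simp only [hA, Finset.coe_filter, Finset.mem_filter, Finset.mem_range,
        Set.mem_ofPred_eq] at hi hj
      have n1 : ∀ l < m, x ≠ v l := fun l hl h => (hv l hl).1 (h ▸ hx)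
      simp only at hij
      split_ifs at hij with c1 c2 c2
      · have := hinj (i + 1) (by omega) (j + 1) (by omega) (Prod.ext_iff.1 hij).2
        omega
      · exact absurd (Prod.ext_iff.1 hij).1 (n1 j (by omega))
      · exact absurd (Prod.ext_iff.1 hij).1.symm (n1 i (by omega))
      · exact hinj i (by omega) j (by omega) (Prod.ext_iff.1 hij).1
  omega

/-- |Empty| ≤ FVST(T)·(2k + |LBack| + 2·FVST(T) + 5), where LBack is the set of
k-long back arcs of T. -/
theorem stmt15 [Fintype V] (E : V → V → Prop) (hT : IsTournament E) (k : ℕ) :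
    Set.ncard (emptyBuckets E) ≤
      FVST E *
        (2 * k + Set.ncard {p : V × V | p ∈ backArcs E ∧ kLong E k p} +
          2 * FVST E + 5) := by
  classical
  obtain ⟨F, hF, hFc⟩ := exists_min_fvs E
  rw [← hFc]
  set L := Set.ncard {p : V × V | p ∈ backArcs E ∧ kLong E k p} with hL
  rcases isEmpty_or_nonempty V with hV | hV
  · have : emptyBuckets E = ∅ := by
      ext d
      simp [emptyBuckets]
    rw [this]
    simp
  obtain ⟨v, hv⟩ := exists_enum E hT F hF
  have hFn : F.card ≤ Fintype.card V := Finset.card_le_univ F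
  set m := Fintype.card V - F.card with hm
  have hg : ∀ i, gF E F (v i) ≤ F.card := fun i => Finset.card_filter_le _ _
  have hd : ∀ i < m, indeg E (v i) = i + gF E F (v i) := by
    intro i hi
    rw [indeg_split E F, (hv i hi).2]
  let G : Finset ℕ := (Finset.range (m - 1)).biUnion fun i =>
    Finset.Ioo (indeg E (v i)) (indeg E (v (i + 1)))
  have hcover : emptyBuckets E ⊆
      ((Finset.range F.card ∪ Finset.Ico m (Fintype.card V) ∪ G : Finset ℕ) : Set ℕ) := by
    intro d hdE
    obtain ⟨hdn, hde⟩ := hdE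
    have hne : ∀ u, indeg E u ≠ d := fun u hu => by
      have : u ∈ ({v : V | indeg E v = d} : Set V) := hu
      rw [hde] at this
      exact this
    simp only [Finset.coe_union, Set.mem_union, Finset.mem_coe, Finset.mem_range,
      Finset.mem_Ico]
    by_cases c1 : d < F.card
    · exact Or.inl (Or.inl c1)
    by_cases c2 : m ≤ d
    · exact Or.inl (Or.inr ⟨c2, hdn⟩)
    right
    have e0 := hd 0 (by omega)
    have e1 := hd (m - 1) (by omega)
    have n0 := hne (v 0)
    have n1 := hne (v (m - 1))
    have g0 := hg 0
    obtain ⟨i, hi, hlt, hle⟩ := exists_jump (fun i => indeg E (v i)) d (m - 1)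
      (by omega) (by omega)
    have := hne (v (i + 1))
    simp only [G, Finset.mem_biUnion, Finset.mem_range, Finset.mem_Ioo]
    exact ⟨i, hi, hlt, by omega⟩
  have hGcard : G.card ≤ F.card * ((2 * k + F.card) + L) := by
    calc G.card ≤ ∑ i ∈ Finset.range (m - 1),
          (Finset.Ioo (indeg E (v i)) (indeg E (v (i + 1)))).card := Finset.card_biUnion_le
      _ ≤ ∑ i ∈ Finset.range (m - 1),
          (F.filter fun x => E x (v (i + 1)) ∧ ¬ E x (v i)).card := by
        apply Finset.sum_le_sum
        intro i hi
        rw [Finset.mem_range] at hi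
        rw [Nat.card_Ioo, hd i (by omega), hd (i + 1) (by omega)]
        have : gF E F (v (i + 1)) ≤ gF E F (v i) +
            (F.filter fun x => E x (v (i + 1)) ∧ ¬ E x (v i)).card := by
          unfold gF
          refine le_trans (Finset.card_le_card ?_) (Finset.card_union_le _ _)
          intro x hx
          simp only [Finset.mem_filter, Finset.mem_union] at hx ⊢
          tauto
        omega
      _ = ∑ x ∈ F, ((Finset.range (m - 1)).filter
            fun i => E x (v (i + 1)) ∧ ¬ E x (v i)).card := by
        simp only [Finset.card_filter]
        exact Finset.sum_comm
      _ ≤ ∑ x ∈ F, ((2 * k + F.card) + L) :=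
        Finset.sum_le_sum fun x hx => trans_bound E hT k m F v hv x hx
      _ = _ := by simp
  have hfin := Set.ncard_le_ncard hcover (Finset.finite_toSet _)
  rw [Set.ncard_coe_finset] at hfin
  have u1 := Finset.card_union_le (Finset.range F.card ∪ Finset.Ico m (Fintype.card V)) G
  have u2 := Finset.card_union_le (Finset.range F.card) (Finset.Ico m (Fintype.card V))
  rw [Finset.card_range, Nat.card_Ico] at u2
  have u3 : Set.ncard (emptyBuckets E) ≤ 2 * F.card + F.card * ((2 * k + F.card) + L) := by
    omega
  refine u3.trans ?_
  nlinarith [Nat.zero_le (F.card * F.card)]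
end

section
/- Let T be a tournament, k ∈ ℕ, and G_LONG the k-long graph of T. Let l ∈ ℕ with l ≤ k, and let F be a feedback vertex set of T with |F| ≤ l. Then: (1) F is a vertex cover of G_LONG; (2) the k-heavy set Heavy(T,k) = {v : deg_{G_LONG}(v) > k} satisfies Heavy(T,k) ⊆ F; and (3) the induced subgraph of G_LONG on V(G_LONG) \ Heavy(T,k) has at most k·l edges. -/
variable {V : Type*}

/-- For `l ≤ k` and a feedback vertex set `F` with `|F| ≤ l`: `F` is a vertex cover of
the k-long graph, the k-heavy set is contained in `F`, and the k-long graph induced on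
the complement of the k-heavy set has at most `k·l` edges. -/
theorem stmt16 [Fintype V] (E : V → V → Prop) (hT : IsTournament E) (k l : ℕ)
    (hlk : l ≤ k) (F : Finset V) (hF : IsFVS E F) (hFl : F.card ≤ l) :
    (∀ a b : V, longAdj E k a b → a ∈ F ∨ b ∈ F) ∧
    heavySet E k ⊆ (F : Set V) ∧
    Set.ncard {e : Sym2 V | ∃ a b : V, e = s(a, b) ∧ longAdj E k a b ∧
      a ∉ heavySet E k ∧ b ∉ heavySet E k} ≤ k * l := by
  classical
  have hcov : ∀ a b : V, (a, b) ∈ backArcs E ∧ kLong E k (a, b) → a ∈ F ∨ b ∈ F := by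
    rintro u v ⟨⟨huv, hd⟩, hk⟩
    simp only [kLong] at huv hd hk
    by_contra hcon
    push Not at hcon
    obtain ⟨hu, hv⟩ := hcon
    have hsub : insert u {w : V | E w u} ⊆ {w : V | E w v} ∪ (F : Set V) := by
      intro w hw
      rcases Set.mem_insert_iff.1 hw with rfl | hw
      · exact Or.inl huv
      · by_contra hn
        have hw' : E w u := hw
        have hwv : ¬ E w v := fun h => hn (Or.inl h)
        have hwF : w ∉ F := fun h => hn (Or.inr h)
        have hne : w ≠ v := by
          rintro rfl
          have hne : w ≠ u := fun h => hu (by subst h; exact absurd hw' (hT.1 _))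
          exact (hT.2 _ _ hne).1 hw' huv
        have hvw : E v w := (hT.2 v w hne.symm).2 hwv
        exact hF u (((Relation.TransGen.single ⟨huv, hu, hv⟩).tail
          ⟨hvw, hv, hwF⟩).tail ⟨hw', hwF, hu⟩)
    have h1 := Set.ncard_le_ncard hsub (Set.toFinite _)
    have h2 := Set.ncard_union_le {w : V | E w v} (F : Set V)
    rw [Set.ncard_insert_of_notMem (show u ∉ {w : V | E w u} from hT.1 u) (Set.toFinite _)] at h1
    rw [Set.ncard_coe_finset] at h2
    change indeg E u + 1 ≤ _ at h1
    change _ ≤ indeg E v + _ at h2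
    rw [abs_of_nonneg (by omega)] at hk
    omega
  have hcover : ∀ a b : V, longAdj E k a b → a ∈ F ∨ b ∈ F := by
    rintro a b (h | h)
    · exact hcov a b h
    · exact (hcov b a h).symm
  refine ⟨hcover, ?_, ?_⟩
  · intro v hv
    by_contra hvF
    have hsub : {u : V | longAdj E k u v} ⊆ (F : Set V) := fun u hu =>
      (hcover u v hu).resolve_right hvF
    have h1 := Set.ncard_le_ncard hsub (Set.toFinite _)
    rw [Set.ncard_coe_finset] at h1
    have h2 : k < Set.ncard {u : V | longAdj E k u v} := hv
    omega
  · have hsub : {e : Sym2 V | ∃ a b : V, e = s(a, b) ∧ longAdj E k a b ∧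
        a ∉ heavySet E k ∧ b ∉ heavySet E k} ⊆
        (((F.filter (fun f => f ∉ heavySet E k)).biUnion fun f =>
          (Set.toFinite {u : V | longAdj E k u f}).toFinset.image (fun u => s(u, f)) :
          Finset (Sym2 V)) : Set (Sym2 V)) := by
      rintro e ⟨a, b, rfl, hab, ha, hb⟩
      simp only [Finset.mem_coe, Finset.mem_biUnion, Finset.mem_filter, Finset.mem_image,
        Set.Finite.mem_toFinset, Set.mem_setOf_eq]
      rcases hcover a b hab with h | h
      · exact ⟨a, ⟨h, ha⟩, b, Or.symm hab, Sym2.eq_swap⟩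
      · exact ⟨b, ⟨h, hb⟩, a, hab, rfl⟩
    have h1 := Set.ncard_le_ncard hsub (Set.toFinite _)
    rw [Set.ncard_coe_finset] at h1
    refine h1.trans ((Finset.card_biUnion_le_card_mul _ _ k ?_).trans ?_)
    · intro f hf
      refine Finset.card_image_le.trans ?_
      rw [← Set.ncard_eq_toFinset_card]
      exact not_lt.1 (Finset.mem_filter.1 hf).2
    · rw [mul_comm]
      exact Nat.mul_le_mul_left k ((Finset.card_filter_le _ _).trans hFl)
end

section
/- Let T be a tournament, F ⊆ V(T), K a finite set of natural numbers (token positions), and rd : V(T) \ F → ℕ a function such that for all w ∈ V(T) \ F, d_{T−F}(w) = rd(w) − |{t ∈ K : t ≤ rd(w)}| and |K| = |F|. Then for every d ∈ ℕ, the reduced degree bucket {w ∈ V(T) \ F : rd(w) = d} has size at most maxdb(T) · (|F| + 1). -/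
variable {V : Type*}

theorem bucket_le_maxdb [Fintype V] (E : V → V → Prop) (hT : IsTournament E) (m : ℕ) :
    Set.ncard {v : V | indeg E v = m} ≤ maxdb E := by
  by_cases hm : m < Fintype.card V
  · exact Finset.le_sup (f := fun d => Set.ncard {v : V | indeg E v = d}) (Finset.mem_range.2 hm)
  · have : {v : V | indeg E v = m} = ∅ := by
      ext v
      simp only [Set.mem_setOf_eq, Set.mem_empty_iff_false, iff_false]
      intro hv
      apply hm
      rw [← hv, ← Nat.card_eq_fintype_card, ← Set.ncard_univ]
      refine Set.ncard_lt_ncard ?_ (Set.toFinite _)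
      rw [Set.ssubset_univ_iff]
      intro h
      have : v ∈ {u : V | E u v} := h ▸ Set.mem_univ v
      exact hT.1 v this
    rw [this]; simp

theorem indeg_bounds [Fintype V] (E : V → V → Prop) (F : Finset V) (w : V) :
    indegOn E ((F : Set V))ᶜ w ≤ indeg E w ∧
      indeg E w ≤ indegOn E ((F : Set V))ᶜ w + F.card := by
  constructor
  · exact Set.ncard_le_ncard (fun u hu => hu.2) (Set.toFinite _)
  · rw [← Set.ncard_coe_finset F]
    refine le_trans (Set.ncard_le_ncard ?_ (Set.toFinite _)) (Set.ncard_union_le _ _)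
    intro u hu
    by_cases h : u ∈ (F : Set V)
    · exact Or.inr h
    · exact Or.inl ⟨h, hu⟩

/-- Every reduced degree bucket has size at most maxdb(T)·(|F| + 1). -/
theorem stmt19 [Fintype V] (E : V → V → Prop) (hT : IsTournament E) (F : Finset V)
    (K : Finset ℕ) (rd : V → ℕ) (hcard : K.card = F.card)
    (hinv : ∀ w : V, w ∉ F →
      indegOn E ((F : Set V))ᶜ w + (K.filter fun t => t ≤ rd w).card = rd w)
    (d : ℕ) :
    Set.ncard {w : V | w ∉ F ∧ rd w = d} ≤ maxdb E * (F.card + 1) := by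
  classical
  set c := d - (K.filter fun t => t ≤ d).card with hc
  have hsub : {w : V | w ∉ F ∧ rd w = d} ⊆
      ⋃ i ∈ Finset.range (F.card + 1), {v : V | indeg E v = c + i} := by
    rintro w ⟨hw, hd⟩
    have h1 := hinv w hw
    rw [hd] at h1
    have h2 := indeg_bounds E F w
    simp only [Set.mem_iUnion, Finset.mem_range, Set.mem_setOf_eq]
    exact ⟨indeg E w - c, by omega, by omega⟩
  calc _ ≤ _ := Set.ncard_le_ncard hsub (Set.toFinite _)
    _ ≤ ∑ i ∈ Finset.range (F.card + 1), Set.ncard {v : V | indeg E v = c + i} :=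
        Finset.set_ncard_biUnion_le _ _
    _ ≤ ∑ i ∈ Finset.range (F.card + 1), maxdb E :=
        Finset.sum_le_sum fun i _ => bucket_le_maxdb E hT _
    _ = _ := by simp [mul_comm]
end
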